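/- arXiv:1903.00794 — 10 statements merged into one kernel-verified Lean document; each statement's English description precedes it below -/
import Mathlib

section
/- For every e ∈ ℝⁿ one has h°(σ₁(e)) = h°(e); in particular the tropical Vieta involution σ₁ preserves every level set {e ∈ ℝⁿ : h°(e) = c}, i.e. it preserves the skeleton of each tropical Calabi–Yau hypersurface in the core pencil. -/
/-!
As a function of the coordinate `e_k` alone, `h°` is `min (m - e_k, h₀, p + e_k)`, where the least
coefficients `m`, `h₀`, `p` of slopes `-1`, `0`, `1` do not involve `e_k`. Replacing `e_k` by
`m - p - e_k` swaps the outer two entries of this minimum and fixes the middle one.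

There may be no term of slope `0` (as when `n = 1`), and an infimum over the empty type is a junk
value, so the minimum is expressed through its lower bounds and `h₀` is never formed.
-/

section OneVariable

variable {ι R G : Type*} [Finite ι] [Ring R] [AddCommGroup G] [ConditionallyCompleteLinearOrder G]
  [IsOrderedAddMonoid G] [Module R G] {s : ι → R}

theorem le_ciInf_add_smul_iff (a : ι → G) (hs : ∀ i, s i = -1 ∨ s i = 0 ∨ s i = 1)
    (hneg : ∃ i, s i = -1) (hpos : ∃ i, s i = 1) (b x : G) :
    b ≤ ⨅ i, (a i + s i • x) ↔
      b ≤ (⨅ i : {i // s i = -1}, a i) - x ∧ (∀ i, s i = 0 → b ≤ a i) ∧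
        b ≤ (⨅ i : {i // s i = 1}, a i) + x := by
  have : Nonempty ι := hneg.nonempty
  have : Nonempty {i // s i = -1} := nonempty_subtype.mpr hneg
  have : Nonempty {i // s i = 1} := nonempty_subtype.mpr hpos
  rw [le_sub_iff_add_le, ← sub_le_iff_le_add, le_ciInf_iff (Set.finite_range _).bddBelow,
    le_ciInf_iff (Set.finite_range _).bddBelow, le_ciInf_iff (Set.finite_range _).bddBelow,
    Subtype.forall, Subtype.forall]
  have term_neg {i} (hi : s i = -1) : b ≤ a i + s i • x ↔ b + x ≤ a i := by
    rw [hi, neg_one_smul, ← sub_eq_add_neg, le_sub_iff_add_le]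
  have term_zero {i} (hi : s i = 0) : b ≤ a i + s i • x ↔ b ≤ a i := by
    rw [hi, zero_smul, add_zero]
  have term_pos {i} (hi : s i = 1) : b ≤ a i + s i • x ↔ b - x ≤ a i := by
    rw [hi, one_smul, sub_le_iff_le_add]
  constructor
  · exact fun h => ⟨fun i hi => (term_neg hi).mp (h i), fun i hi => (term_zero hi).mp (h i),
      fun i hi => (term_pos hi).mp (h i)⟩
  · rintro ⟨h_neg, h_zero, h_pos⟩ i
    rcases hs i with hi | hi | hi
    · exact (term_neg hi).mpr (h_neg i hi)
    · exact (term_zero hi).mpr (h_zero i hi)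
    · exact (term_pos hi).mpr (h_pos i hi)

theorem ciInf_add_smul_reflect (a : ι → G) (hs : ∀ i, s i = -1 ∨ s i = 0 ∨ s i = 1)
    (hneg : ∃ i, s i = -1) (hpos : ∃ i, s i = 1) (x : G) :
    ⨅ i, (a i + s i • ((⨅ i : {i // s i = -1}, a i) - (⨅ i : {i // s i = 1}, a i) - x)) =
      ⨅ i, (a i + s i • x) := by
  refine eq_of_forall_le_iff fun b => ?_
  rw [le_ciInf_add_smul_iff a hs hneg hpos, le_ciInf_add_smul_iff a hs hneg hpos]
  generalize (⨅ i : {i // s i = -1}, a i) = m, (⨅ i : {i // s i = 1}, a i) = p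
  have swap_neg : m - (m - p - x) = p + x := by abel
  have swap_pos : p + (m - p - x) = m - x := by abel
  rw [swap_neg, swap_pos]
  tauto

end OneVariable

section SeveralVariables

variable {ι κ R G : Type*} [Fintype κ] [Ring R] [AddCommGroup G] [Module R G]

/-- The tropical Laurent polynomial function with terms indexed by `ι` and variables by `κ`, whose
term `i` has coefficient `c i` and exponent vector `w i`. Scalar multiplication allows integer
exponents as well as real ones. -/
noncomputable def tropicalLaurentEval [InfSet G] (c : ι → G) (w : ι → κ → R) (e : κ → G) : G :=
  ⨅ i, (c i + ∑ j, w i j • e j)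

variable [DecidableEq κ]

/-- The coefficient of slope `r` in the variable `k`: the minimum of the terms whose exponent at `k`
is `r`, with the contribution of `k` left out. For `r = -1` and `r = 1` these are the `h₋₁` and `h₁`
of the Vieta involution. It is a junk value if there is no such term. -/
noncomputable def tropicalSlopeCoeff [InfSet G] (c : ι → G) (w : ι → κ → R) (k : κ) (r : R)
    (e : κ → G) : G :=
  ⨅ i : {i // w i k = r}, (c i + ∑ j ∈ Finset.univ.erase k, w i j • e j)

/-- The tropical Vieta involution in the variable `k`: the tropicalization of exchanging the two
roots of `a * x⁻¹ + b + c * x`, whose product is `a / c`. -/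
noncomputable def tropicalVieta [InfSet G] (c : ι → G) (w : ι → κ → R) (k : κ) (e : κ → G) :
    κ → G :=
  Function.update e k (tropicalSlopeCoeff c w k (-1) e - tropicalSlopeCoeff c w k 1 e - e k)

theorem sum_smul_update (v : κ → R) (e : κ → G) (k : κ) (x : G) :
    ∑ j, v j • Function.update e k x j = ∑ j ∈ Finset.univ.erase k, v j • e j + v k • x := by
  rw [← Finset.sum_erase_add _ _ (Finset.mem_univ k), Function.update_self]
  congr 1
  exact Finset.sum_congr rfl fun j hj => by
    rw [Function.update_of_ne (Finset.ne_of_mem_erase hj)]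

theorem tropicalLaurentEval_update [InfSet G] (c : ι → G) (w : ι → κ → R) (e : κ → G) (k : κ)
    (x : G) :
    tropicalLaurentEval c w (Function.update e k x) =
      ⨅ i, (c i + ∑ j ∈ Finset.univ.erase k, w i j • e j + w i k • x) := by
  simp only [tropicalLaurentEval, sum_smul_update, add_assoc]

theorem stmt_0_general [Finite ι] [ConditionallyCompleteLinearOrder G] [IsOrderedAddMonoid G]
    (c : ι → G) (w : ι → κ → R) (k : κ) (hw : ∀ i, w i k = -1 ∨ w i k = 0 ∨ w i k = 1)
    (hneg : ∃ i, w i k = -1) (hpos : ∃ i, w i k = 1) (e : κ → G) :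
    tropicalLaurentEval c w (tropicalVieta c w k e) = tropicalLaurentEval c w e := by
  rw [tropicalVieta, tropicalLaurentEval_update]
  refine (ciInf_add_smul_reflect _ hw hneg hpos (e k)).trans ?_
  rw [← tropicalLaurentEval_update, Function.update_eq_self]

end SeveralVariables

section CubeExponents

/-- The exponent in `{-1, 0, 1}` encoded by an element of `Fin 3`, which is shifted by one. -/
def cubeExponent (d : Fin 3) : ℝ := (d : ℝ) - 1

theorem cubeExponent_zero : cubeExponent 0 = -1 := by norm_num [cubeExponent]

theorem cubeExponent_one : cubeExponent 1 = 0 := by norm_num [cubeExponent]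

theorem cubeExponent_two : cubeExponent 2 = 1 := by norm_num [cubeExponent]

theorem cubeExponent_injective : Function.Injective cubeExponent :=
  (sub_left_injective (b := (1 : ℝ))).comp (Nat.cast_injective.comp Fin.val_injective)

theorem cubeExponent_trichotomy (d : Fin 3) :
    cubeExponent d = -1 ∨ cubeExponent d = 0 ∨ cubeExponent d = 1 := by
  fin_cases d
  exacts [.inl cubeExponent_zero, .inr (.inl cubeExponent_one), .inr (.inr cubeExponent_two)]

variable {κ : Type*}

theorem exists_ne_const_cubeExponent_eq (k : κ) {d a : Fin 3} (hd : d ≠ a) :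
    ∃ i : {i : κ → Fin 3 // i ≠ fun _ => a}, cubeExponent (i.1 k) = cubeExponent d :=
  ⟨⟨fun _ => d, fun h => hd (congrFun h k)⟩, rfl⟩

variable [Fintype κ] [DecidableEq κ] {p : (κ → Fin 3) → Prop}

theorem tropicalSlopeCoeff_cubeExponent (c : Subtype p → ℝ) (k : κ) (d : Fin 3) (e : κ → ℝ) :
    tropicalSlopeCoeff c (fun i j => cubeExponent (i.1 j)) k (cubeExponent d) e =
      ⨅ i : {i : Subtype p // i.1 k = d},
        (c i + ∑ j ∈ Finset.univ.erase k, cubeExponent (i.1.1 j) * e j) := by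
  simp only [tropicalSlopeCoeff, smul_eq_mul]
  exact (Equiv.subtypeEquivRight fun _ => cubeExponent_injective.eq_iff).iInf_congr fun _ => rfl

theorem tropicalVieta_cubeExponent (c : Subtype p → ℝ) (k : κ) (e : κ → ℝ) :
    tropicalVieta c (fun i j => cubeExponent (i.1 j)) k e =
      Function.update e k
        ((⨅ i : {i : Subtype p // i.1 k = 0},
            (c i + ∑ j ∈ Finset.univ.erase k, cubeExponent (i.1.1 j) * e j)) -
          (⨅ i : {i : Subtype p // i.1 k = 2},
            (c i + ∑ j ∈ Finset.univ.erase k, cubeExponent (i.1.1 j) * e j)) - e k) := by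
  rw [tropicalVieta, ← cubeExponent_zero, ← cubeExponent_two, tropicalSlopeCoeff_cubeExponent,
    tropicalSlopeCoeff_cubeExponent]

end CubeExponents

/-- The tropical Vieta involution `σ₁` preserves the value of the tropical
polynomial `h°`, hence preserves every level set `{e : h°(e) = c}` (the skeleton of each
tropical Calabi–Yau hypersurface in the core pencil).

Indices `i ∈ {−1,0,1}ⁿ \ {0}` are encoded as functions `Fin n → Fin 3`, where `Fin 3`
value `k` corresponds to the integer `k − 1 ∈ {−1,0,1}`, and the excluded index
`(0,…,0)` corresponds to the constant function `1`. -/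
theorem stmt_0 (n : ℕ) (hn : 0 < n)
    (c : {i : Fin n → Fin 3 // i ≠ fun _ => 1} → ℝ) :
    -- value of an index entry, in {−1,0,1}
    let val : Fin 3 → ℝ := fun k => (k : ℝ) - 1
    -- the tropical polynomial h°
    let hstar : (Fin n → ℝ) → ℝ := fun e =>
      ⨅ i : {i : Fin n → Fin 3 // i ≠ fun _ => 1},
        c i + ∑ j, val (i.1 j) * e j
    -- h₋₁ : min over indices with i₁ = −1, involving only e₂,…,eₙ
    let hm : (Fin n → ℝ) → ℝ := fun e =>
      ⨅ i : {i : {i : Fin n → Fin 3 // i ≠ fun _ => 1} // i.1 ⟨0, hn⟩ = 0},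
        c i.1 + ∑ j ∈ Finset.univ.erase (⟨0, hn⟩ : Fin n), val (i.1.1 j) * e j
    -- h₁ : min over indices with i₁ = 1, involving only e₂,…,eₙ
    let hp : (Fin n → ℝ) → ℝ := fun e =>
      ⨅ i : {i : {i : Fin n → Fin 3 // i ≠ fun _ => 1} // i.1 ⟨0, hn⟩ = 2},
        c i.1 + ∑ j ∈ Finset.univ.erase (⟨0, hn⟩ : Fin n), val (i.1.1 j) * e j
    -- the tropical Vieta involution σ₁
    let σ₁ : (Fin n → ℝ) → (Fin n → ℝ) := fun e =>
      Function.update e ⟨0, hn⟩ (hm e - hp e - e ⟨0, hn⟩)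
    ∀ e : Fin n → ℝ, hstar (σ₁ e) = hstar e := by
  intro _ _ _ _ _ e
  let k : Fin n := ⟨0, hn⟩
  have hneg := cubeExponent_zero ▸ exists_ne_const_cubeExponent_eq k (d := 0) (a := 1) (by decide)
  have hpos := cubeExponent_two ▸ exists_ne_const_cubeExponent_eq k (d := 2) (a := 1) (by decide)
  have h := stmt_0_general c (fun i j => cubeExponent (i.1 j)) k
    (fun i => cubeExponent_trichotomy (i.1 k)) hneg hpos e
  rwa [tropicalVieta_cubeExponent] at h
end

section
/- If v ∈ ℝ³ satisfies M·v = λ·v for some real λ > 1, then there exists a unique continuous v-homogeneous function G : E → ℝ satisfying G(F(p)) = λ·G(p) for all p ∈ E. -/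
/-!
The linear form `G₀ p = p 0 ⬝ᵥ v` is continuous and `v`-homogeneous, so `G` is continuous and
`v`-homogeneous if and only if `G - G₀` comes from a continuous function `u` on the quotient of `E`
by translations, which is compact. As `M v = λ v`, the map `F` descends to a self-map `f` of this
quotient and `λ G₀ - G₀ ∘ F` to a function `d` on it, and `G ∘ F = λ G` becomes `u ∘ f = λ u + d`.
Composition with `f` is an operator of norm at most `1 < λ` on the Banach space of bounded
continuous functions, so `λ` is not in its spectrum and the equation has exactly one solution `u`.
-/

open scoped BoundedContinuousFunction

section BanachSpace

variable {𝕜 V : Type*} [NontriviallyNormedField 𝕜] [NormedAddCommGroup V] [NormedSpace 𝕜 V]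
  [CompleteSpace V] {c : 𝕜}

lemma existsUnique_apply_eq_smul_add_of_norm_lt {T : V →L[𝕜] V} (hT : ‖T‖ < ‖c‖) (d : V) :
    ∃! u, T u = c • u + d := by
  have hc : c ∈ resolventSet 𝕜 T := by
    refine spectrum.mem_resolventSet_of_norm_lt_mul (lt_of_le_of_lt ?_ hT)
    exact mul_le_of_le_one_right (norm_nonneg T) ContinuousLinearMap.norm_id_le
  have hbij : Function.Bijective (algebraMap 𝕜 (V →L[𝕜] V) c - T) :=
    ContinuousLinearMap.isUnit_iff_bijective.mp (spectrum.mem_resolventSet_iff.mp hc)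
  refine (existsUnique_congr fun u => ?_).mp (hbij.existsUnique (-d))
  rw [sub_apply, ContinuousLinearMap.algebraMap_apply, sub_eq_iff_eq_add, neg_add_eq_sub,
    eq_sub_iff_add_eq, eq_comm]

lemma existsUnique_boundedContinuousFunction_comp_eq_smul_add {Y : Type*} [TopologicalSpace Y]
    (hc : 1 < ‖c‖) (f : C(Y, Y)) (d : Y →ᵇ V) :
    ∃! u : Y →ᵇ V, ∀ y, u (f y) = c • u y + d y := by
  let T : (Y →ᵇ V) →L[𝕜] (Y →ᵇ V) := BoundedContinuousFunction.compContinuousCLM V 𝕜 f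
  have hT : ‖T‖ ≤ 1 := LinearMap.mkContinuous_norm_le _ zero_le_one _
  refine (existsUnique_congr fun u => ?_).mp
    (existsUnique_apply_eq_smul_add_of_norm_lt (hT.trans_lt hc) d)
  exact DFunLike.ext_iff

end BanachSpace

/-- `G` is homogeneous of weight `χ` for an additive action: translating the argument by `a` adds
`χ a` to the value. This is `v`-homogeneity when `χ t = t ⬝ᵥ v`, and invariance when `χ = 0`. -/
def IsAddHomogeneous {A X V : Type*} [VAdd A X] [Add V] (χ : A → V) (G : X → V) : Prop :=
  ∀ a x, G (a +ᵥ x) = G x + χ a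

namespace IsAddHomogeneous

variable {A X V : Type*} [VAdd A X] {χ : A → V} {G : X → V}

lemma const_smul {R : Type*} [AddZeroClass V] [DistribSMul R V] (hG : IsAddHomogeneous χ G)
    (c : R) : IsAddHomogeneous (c • χ) (c • G) := fun a x => by
  simp only [Pi.smul_apply, hG a x, smul_add]

lemma comp [Add V] (hG : IsAddHomogeneous χ G) {φ : A → A} {f : X → X}
    (hf : ∀ a x, f (a +ᵥ x) = φ a +ᵥ f x) : IsAddHomogeneous (χ ∘ φ) (G ∘ f) := fun a x => by
  simp only [Function.comp_apply, hf, hG (φ a)]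

end IsAddHomogeneous

section OrbitSpace

variable {A X : Type*} [AddGroup A] [AddAction A X] [TopologicalSpace X]

lemma compactSpace_quotient_orbitRel_of_isCompact {S : Set X} (hS : IsCompact S)
    (hmeets : ∀ x, ∃ a : A, a +ᵥ x ∈ S) : CompactSpace (Quotient (AddAction.orbitRel A X)) := by
  have himage : Quotient.mk (AddAction.orbitRel A X) '' S = Set.univ := by
    refine Set.eq_univ_of_forall (Quotient.ind fun x => ?_)
    obtain ⟨a, ha⟩ := hmeets x
    exact ⟨a +ᵥ x, ha, Quotient.sound (AddAction.mem_orbit x a)⟩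
  exact ⟨himage ▸ hS.image continuous_quotient_mk'⟩

variable [CompactSpace (Quotient (AddAction.orbitRel A X))]

lemma continuous_and_isAddHomogeneous_iff_exists_eq_add {V : Type*} [NormedAddCommGroup V]
    {χ : A → V} {G₀ G : X → V} (hG₀ : Continuous G₀) (hG₀χ : IsAddHomogeneous χ G₀) :
    Continuous G ∧ IsAddHomogeneous χ G ↔
      ∃ u : Quotient (AddAction.orbitRel A X) →ᵇ V, ∀ x, G x = G₀ x + u ⟦x⟧ := by
  constructor
  · rintro ⟨hG, hGχ⟩
    have hinv : ∀ x y, AddAction.orbitRel A X x y → (G - G₀) x = (G - G₀) y := by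
      rintro _ y ⟨a, rfl⟩
      simp only [Pi.sub_apply, hGχ a y, hG₀χ a y, add_sub_add_right_eq_sub]
    refine ⟨.mkOfCompact ⟨Quotient.lift (G - G₀) hinv, (hG.sub hG₀).quotient_lift hinv⟩,
      fun x => ?_⟩
    exact (add_sub_cancel (G₀ x) (G x)).symm
  · rintro ⟨u, hu⟩
    obtain rfl : G = fun x => G₀ x + u ⟦x⟧ := funext hu
    refine ⟨hG₀.add (u.continuous.comp continuous_quotient_mk'), fun a x => ?_⟩
    have horbit : (⟦a +ᵥ x⟧ : Quotient (AddAction.orbitRel A X)) = ⟦x⟧ :=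
      Quotient.sound (AddAction.mem_orbit x a)
    simp only [horbit, hG₀χ a x, add_right_comm]

theorem existsUnique_isAddHomogeneous_comp_eq_smul {𝕜 V : Type*} [NontriviallyNormedField 𝕜]
    [NormedAddCommGroup V] [NormedSpace 𝕜 V] [CompleteSpace V] {c : 𝕜} (hc : 1 < ‖c‖)
    {φ : A → A} {f : X → X} (hf : Continuous f) (hfφ : ∀ a x, f (a +ᵥ x) = φ a +ᵥ f x)
    {χ : A → V} (hχ : ∀ a, χ (φ a) = c • χ a)
    {G₀ : X → V} (hG₀ : Continuous G₀) (hG₀χ : IsAddHomogeneous χ G₀) :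
    ∃! G : X → V, Continuous G ∧ IsAddHomogeneous χ G ∧ ∀ x, G (f x) = c • G x := by
  have hforbit : ∀ x y, AddAction.orbitRel A X x y → AddAction.orbitRel A X (f x) (f y) := by
    rintro _ y ⟨a, rfl⟩
    exact ⟨φ a, (hfφ a y).symm⟩
  let fbar : C(Quotient (AddAction.orbitRel A X), Quotient (AddAction.orbitRel A X)) :=
    ⟨Quotient.map' f hforbit, hf.quotient_map' hforbit⟩
  have hweight : χ ∘ φ = c • χ := funext hχ
  obtain ⟨d, hd⟩ := (continuous_and_isAddHomogeneous_iff_exists_eq_add (hG₀.comp hf)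
    (hG₀χ.comp hfφ)).mp ⟨hG₀.const_smul c, hweight ▸ hG₀χ.const_smul c⟩
  have hequation (u : Quotient (AddAction.orbitRel A X) →ᵇ V) :
      (∀ x, G₀ (f x) + u ⟦f x⟧ = c • (G₀ x + u ⟦x⟧)) ↔ ∀ y, u (fbar y) = c • u y + d y := by
    refine Iff.trans (forall_congr' fun x => ?_) Quotient.forall.symm
    rw [smul_add, ← Pi.smul_apply c G₀, hd x, Function.comp_apply, add_assoc, add_right_inj,
      add_comm (d _)]
    rfl
  obtain ⟨u, hu, hunique⟩ := existsUnique_boundedContinuousFunction_comp_eq_smul_add hc fbar d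
  obtain ⟨hG, hGχ⟩ :=
    (continuous_and_isAddHomogeneous_iff_exists_eq_add hG₀ hG₀χ).mpr ⟨u, fun _ => rfl⟩
  refine ⟨_, ⟨hG, hGχ, (hequation u).mpr hu⟩, ?_⟩
  rintro G' ⟨hG', hG'χ, hG'f⟩
  obtain ⟨w, hw⟩ := (continuous_and_isAddHomogeneous_iff_exists_eq_add hG₀ hG₀χ).mp ⟨hG', hG'χ⟩
  obtain rfl : G' = fun x => G₀ x + w ⟦x⟧ := funext hw
  rw [hunique w ((hequation w).mp hG'f)]

end OrbitSpace

section RowTranslation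

variable {A : Type*} [AddCommGroup A] {E : Set (Fin 2 → A)}

/-- The action of `A` by row translation on a set `E` of pairs of rows, where `t +ᵥ p` is `p ⊞ t`.
The vector is added on the right so that this unfolds to the expression of the theorem. -/
abbrev rowTranslation (hE : ∀ p ∈ E, ∀ t : A, (fun a => p a + t) ∈ E) : AddAction A E where
  vadd t p := ⟨fun a => p.1 a + t, hE p.1 p.2 t⟩
  zero_vadd p := Subtype.ext (funext fun a => add_zero (p.1 a))
  add_vadd s t p := Subtype.ext (funext fun a => by
    change p.1 a + (s + t) = p.1 a + t + s
    rw [add_comm s, add_assoc])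

variable [TopologicalSpace A]

lemma isCompact_setOf_row_zero_eq_zero (hE : ∀ p ∈ E, ∀ t : A, (fun a => p a + t) ∈ E)
    (hcomp : IsCompact ((fun p : Fin 2 → A => p 1 - p 0) '' E)) :
    IsCompact {p : E | p.1 0 = 0} := by
  have himage : Subtype.val '' {p : E | p.1 0 = 0} =
      (fun w => ![0, w]) '' ((fun p : Fin 2 → A => p 1 - p 0) '' E) := by
    ext q
    constructor
    · rintro ⟨p, hp : p.1 0 = 0, rfl⟩
      refine ⟨_, ⟨p, p.2, rfl⟩, ?_⟩
      ext a
      fin_cases a <;> simp [hp]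
    · rintro ⟨_, ⟨p, hp, rfl⟩, rfl⟩
      refine ⟨⟨_, hE p hp (-p 0)⟩, add_neg_cancel (p 0), ?_⟩
      ext a
      fin_cases a <;> simp [sub_eq_add_neg]
  rw [Subtype.isCompact_iff, himage]
  exact hcomp.image (by fun_prop)

lemma compactSpace_quotient_rowTranslation (hE : ∀ p ∈ E, ∀ t : A, (fun a => p a + t) ∈ E)
    (hcomp : IsCompact ((fun p : Fin 2 → A => p 1 - p 0) '' E)) :
    letI := rowTranslation hE
    CompactSpace (Quotient (AddAction.orbitRel A E)) := by
  let := rowTranslation hE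
  refine compactSpace_quotient_orbitRel_of_isCompact
    (isCompact_setOf_row_zero_eq_zero hE hcomp) fun p => ⟨-p.1 0, ?_⟩
  exact add_neg_cancel (p.1 0)

end RowTranslation

theorem stmt_2_general {𝕜 ι : Type*} [NontriviallyNormedField 𝕜] [CompleteSpace 𝕜] [Fintype ι]
    (E : Set (Fin 2 → ι → 𝕜))
    (hstab : ∀ p ∈ E, ∀ t : ι → 𝕜, (fun a j => p a j + t j) ∈ E)
    (hcomp : IsCompact ((fun p : Fin 2 → ι → 𝕜 => fun j => p 1 j - p 0 j) '' E))
    (M : Matrix ι ι 𝕜)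
    (F : (Fin 2 → ι → 𝕜) → (Fin 2 → ι → 𝕜))
    (hF : Set.MapsTo F E E) (hFc : ContinuousOn F E)
    (hFhom : ∀ p ∈ E, ∀ t : ι → 𝕜,
      F (fun a j => p a j + t j) = fun a j => F p a j + Matrix.vecMul t M j)
    (v : ι → 𝕜) (lam : 𝕜) (hlam : 1 < ‖lam‖)
    (hv : M.mulVec v = lam • v) :
    ∃! G : E → 𝕜,
      Continuous G ∧
      (∀ (p : E) (t : ι → 𝕜),
        G ⟨fun a j => p.1 a j + t j, hstab p.1 p.2 t⟩ = G p + ∑ j, t j * v j) ∧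
      (∀ p : E, G ⟨F p.1, hF p.2⟩ = lam * G p) := by
  let := rowTranslation hstab
  have := compactSpace_quotient_rowTranslation hstab hcomp
  have hFequivariant (t : ι → 𝕜) (p : E) :
      hF.restrict F E E (t +ᵥ p) = Matrix.vecMul t M +ᵥ hF.restrict F E E p :=
    Subtype.ext (hFhom p p.2 t)
  have hweight (t : ι → 𝕜) : Matrix.vecMul t M ⬝ᵥ v = lam • (t ⬝ᵥ v) := by
    rw [← Matrix.dotProduct_mulVec, hv, dotProduct_smul]
  have hform : Continuous fun p : E => p.1 0 ⬝ᵥ v :=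
    ((continuous_apply 0).comp continuous_subtype_val).dotProduct continuous_const
  have hformHom : IsAddHomogeneous (· ⬝ᵥ v) fun p : E => p.1 0 ⬝ᵥ v := fun t p =>
    add_dotProduct (p.1 0) t v
  refine (existsUnique_congr fun G => ?_).mp (existsUnique_isAddHomogeneous_comp_eq_smul hlam
    (hFc.mapsToRestrict hF) hFequivariant hweight hform hformHom)
  exact and_congr_right' (and_congr_left' forall_comm)

/-- Existence and uniqueness of a continuous `v`-homogeneous potential
`G : E → ℝ` with `G ∘ F = λ·G`, for a lift `F` of an automorphism of the skeleton to the
bundle `E` of 2×3 matrices, homogeneous of degree the 3×3 matrix `M`, when `M·v = λ·v`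
with `λ > 1`.  Points of the bundle are functions `Fin 2 → Fin 3 → ℝ`; `p ⊞ t` adds the
vector `t` columnwise. -/
theorem stmt_2
    (E : Set (Fin 2 → Fin 3 → ℝ))
    (hne : E.Nonempty) (hcl : IsClosed E)
    (hstab : ∀ p ∈ E, ∀ t : Fin 3 → ℝ, (fun a j => p a j + t j) ∈ E)
    (hcomp : IsCompact ((fun p : Fin 2 → Fin 3 → ℝ => fun j => p 1 j - p 0 j) '' E))
    (M : Matrix (Fin 3) (Fin 3) ℝ)
    (F : (Fin 2 → Fin 3 → ℝ) → (Fin 2 → Fin 3 → ℝ))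
    (hF : Set.MapsTo F E E) (hFc : ContinuousOn F E)
    (hFhom : ∀ p ∈ E, ∀ t : Fin 3 → ℝ,
      F (fun a j => p a j + t j) = fun a j => F p a j + Matrix.vecMul t M j)
    (v : Fin 3 → ℝ) (lam : ℝ) (hlam : 1 < lam)
    (hv : M.mulVec v = lam • v) :
    ∃! G : E → ℝ,
      Continuous G ∧
      (∀ (p : E) (t : Fin 3 → ℝ),
        G ⟨fun a j => p.1 a j + t j, hstab p.1 p.2 t⟩ = G p + ∑ j, t j * v j) ∧
      (∀ p : E, G ⟨F p.1, hF p.2⟩ = lam * G p) := by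
  exact stmt_2_general E hstab hcomp M F hF hFc hFhom v lam
    (hlam.trans_le (Real.le_norm_self lam)) hv
end

section
/- The subgroup of SL(2,ℤ) consisting of all matrices congruent to the identity matrix modulo 2 is generated by the three matrices −I, [[1,2],[0,1]] and [[1,0],[2,1]]. -/
open scoped MatrixGroups
open Matrix.SpecialLinearGroup CongruenceSubgroup

/-!
Every matrix in `Γ(2)` is reduced by a Euclidean algorithm on its first column `(a, c)`, in which
multiples of `2c` are added to `a` and multiples of `2a` to `c`. The division with remainder in
`[-|c|, |c|]` makes `|a| ≤ |c|`; as `a` is odd and `c` is even, this inequality is strict, so that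
reducing `c` modulo `2a` then makes `|c|` strictly smaller. The algorithm stops at `c = 0`, where
the matrix is, up to sign, a power of the upper unipotent generator.
-/

lemma exists_abs_add_zsmul_two_nsmul_le {α : Type*} [AddCommGroup α] [LinearOrder α]
    [IsOrderedAddMonoid α] [Archimedean α] (a : α) {b : α} (hb : b ≠ 0) :
    ∃ k : ℤ, |a + k • (2 • b)| ≤ |b| := by
  obtain ⟨k, ⟨hlower, hupper⟩, -⟩ :=
    existsUnique_add_zsmul_mem_Ioc (nsmul_pos (abs_pos.mpr hb) two_ne_zero) a (-|b|)
  have hk : |a + k • (2 • |b|)| ≤ |b| :=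
    abs_le.mpr ⟨hlower.le, hupper.trans_eq (by rw [two_nsmul, neg_add_cancel_left])⟩
  rcases abs_choice b with h | h
  · exact ⟨k, by rwa [h] at hk ⊢⟩
  · exact ⟨-k, by rwa [h, smul_neg, smul_neg, ← neg_smul, ← h] at hk⟩

lemma exists_abs_add_mul_two_mul_lt {a c : ℤ} (ha : Odd a) (hc : Even c) (hc₀ : c ≠ 0) :
    ∃ k l : ℤ, |c + l * 2 * (a + k * 2 * c)| < |c| := by
  obtain ⟨k, hk⟩ := exists_abs_add_zsmul_two_nsmul_le a hc₀
  set r := a + k * 2 * c with hr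
  have hr_odd : Odd r := ha.add_even (hc.mul_left _)
  have hr₀ : r ≠ 0 := fun h ↦ by simp [h] at hr_odd
  have hr_le : |r| ≤ |c| := by simpa [hr, mul_assoc] using hk
  have hr_ne : |r| ≠ |c| := fun h ↦
    Int.not_even_iff_odd.mpr (odd_abs.mpr hr_odd) (h ▸ even_abs.mpr hc)
  obtain ⟨l, hl⟩ := exists_abs_add_zsmul_two_nsmul_le c hr₀
  refine ⟨k, l, lt_of_le_of_lt ?_ (hr_le.lt_of_ne hr_ne)⟩
  simpa [hr, mul_assoc] using hl

section Transvection

variable {ι R : Type*} [DecidableEq ι] [Fintype ι] [CommRing R] {i j : ι}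

lemma transvection_zpow (hij : i ≠ j) (b : R) (k : ℤ) :
    transvection hij b ^ k = transvection hij (k • b) :=
  (map_zpow (MonoidHom.mk' (fun x : Multiplicative R ↦ transvection hij x.toAdd)
    fun x y ↦ transvection_add hij x.toAdd y.toAdd) (.ofAdd b) k).symm

lemma transvection_zsmul_mem {H : Subgroup (Matrix.SpecialLinearGroup ι R)} {hij : i ≠ j}
    {b : R} (h : transvection hij b ∈ H) (k : ℤ) : transvection hij (k • b) ∈ H := by
  rw [← transvection_zpow]
  exact H.zpow_mem h k

lemma coe_transvection_zero_one (b : R) :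
    (transvection (zero_ne_one (α := Fin 2)) b : Matrix (Fin 2) (Fin 2) R) = !![1, b; 0, 1] := by
  ext i j
  fin_cases i <;> fin_cases j <;> simp [transvection_coe]

lemma coe_transvection_one_zero (b : R) :
    (transvection (one_ne_zero (α := Fin 2)) b : Matrix (Fin 2) (Fin 2) R) = !![1, 0; b, 1] := by
  ext i j
  fin_cases i <;> fin_cases j <;> simp [transvection_coe]

end Transvection

lemma eq_transvection_or_eq_neg_transvection {g : SL(2, ℤ)} (hg : g 1 0 = 0) :
    g = transvection zero_ne_one (g 0 1) ∨ g = -transvection zero_ne_one (-g 0 1) := by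
  have hdet : g 0 0 * g 1 1 = 1 := by
    simpa only [Matrix.det_fin_two, hg, mul_zero, sub_zero] using g.det_coe
  refine (Int.mul_eq_one_iff_eq_one_or_neg_one.mp hdet).imp ?_ ?_ <;>
  · rintro ⟨h₀₀, h₁₁⟩
    ext i j
    fin_cases i <;> fin_cases j <;> simp [transvection_coe, hg, h₀₀, h₁₁]

lemma exists_transvection_mul_transvection_mul_abs_lt {g : SL(2, ℤ)} (ha : Odd (g 0 0))
    (hc : Even (g 1 0)) (hc₀ : g 1 0 ≠ 0) :
    ∃ k l : ℤ, |(transvection one_ne_zero (l • 2) *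
      (transvection zero_ne_one (k • 2) * g) : SL(2, ℤ)) 1 0| < |g 1 0| := by
  obtain ⟨k, l, hlt⟩ := exists_abs_add_mul_two_mul_lt ha hc hc₀
  refine ⟨k, l, ?_⟩
  simpa [coe_transvection_zero_one, coe_transvection_one_zero, Matrix.vecMul_eq_sum,
    add_comm] using hlt

lemma transvection_mem_Gamma {N : ℕ} {i j : Fin 2} (hij : i ≠ j) {b : ℤ} (hb : (N : ℤ) ∣ b) :
    transvection hij b ∈ Γ(N) := by
  rw [← ZMod.intCast_zmod_eq_zero_iff_dvd] at hb
  fin_cases i <;> fin_cases j <;> simp_all [transvection_coe]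

lemma neg_one_mem_Gamma_two : (-1 : SL(2, ℤ)) ∈ Γ(2) := by
  rw [Gamma_mem]
  decide

lemma Gamma_two_le {H : Subgroup SL(2, ℤ)} (hneg : -1 ∈ H)
    (hupper : transvection zero_ne_one 2 ∈ H) (hlower : transvection one_ne_zero 2 ∈ H) :
    Γ(2) ≤ H := by
  have hmem {i j : Fin 2} (hij : i ≠ j) (k : ℤ) : transvection hij (k • 2) ∈ Γ(2) :=
    transvection_mem_Gamma hij (dvd_mul_left 2 k)
  intro g hg
  induction hn : (g 1 0).natAbs using Nat.strong_induction_on generalizing g with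
  | _ n ih =>
    subst hn
    obtain ⟨ha, hb, hc, -⟩ := Gamma_mem.mp hg
    rw [ZMod.intCast_eq_one_iff_odd] at ha
    rw [ZMod.intCast_eq_zero_iff_even] at hb hc
    by_cases hc₀ : g 1 0 = 0
    · obtain ⟨m, hm⟩ := hb
      rw [← mul_two, ← smul_eq_mul] at hm
      rcases eq_transvection_or_eq_neg_transvection hc₀ with h | h
      · rw [h, hm]
        exact transvection_zsmul_mem hupper m
      · rw [h, hm, ← neg_smul, ← neg_one_mul]
        exact H.mul_mem hneg (transvection_zsmul_mem hupper (-m))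
    · obtain ⟨k, l, hlt⟩ := exists_transvection_mul_transvection_mul_abs_lt ha hc hc₀
      have hreduced := ih _ (by zify; exact hlt)
        (mul_mem (hmem _ l) (mul_mem (hmem _ k) hg)) rfl
      rwa [H.mul_mem_cancel_left (transvection_zsmul_mem hlower l),
        H.mul_mem_cancel_left (transvection_zsmul_mem hupper k)] at hreduced

theorem closure_neg_one_transvection_eq_Gamma_two :
    Subgroup.closure {-1, transvection zero_ne_one 2, transvection one_ne_zero 2} = Γ(2) := by
  apply le_antisymm
  · rw [Subgroup.closure_le]
    rintro _ (rfl | rfl | rfl)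
    exacts [neg_one_mem_Gamma_two, transvection_mem_Gamma _ dvd_rfl,
      transvection_mem_Gamma _ dvd_rfl]
  · apply Gamma_two_le <;> exact Subgroup.subset_closure (by simp)

lemma mem_Gamma_iff_forall_apply {N : ℕ} {g : SL(2, ℤ)} :
    g ∈ Γ(N) ↔ ∀ i j, (g i j : ZMod N) = ((1 : Matrix (Fin 2) (Fin 2) ℤ) i j : ZMod N) := by
  simp [Fin.forall_fin_two, and_assoc]

/-- The subgroup of `SL(2,ℤ)` of matrices congruent to the identity modulo 2
is generated by `−I`, `[[1,2],[0,1]]` and `[[1,0],[2,1]]`. -/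
theorem stmt_4 :
    (Subgroup.closure
        ({ -1,
           ⟨!![1, 2; 0, 1], by norm_num [Matrix.det_fin_two_of]⟩,
           ⟨!![1, 0; 2, 1], by norm_num [Matrix.det_fin_two_of]⟩ } :
          Set SL(2, ℤ)) : Set SL(2, ℤ)) =
      {g : SL(2, ℤ) | ∀ i j : Fin 2,
        ((g.1 i j : ZMod 2)) = ((1 : Matrix (Fin 2) (Fin 2) ℤ) i j : ZMod 2)} := by
  have hupper : (⟨!![1, 2; 0, 1], by norm_num [Matrix.det_fin_two_of]⟩ : SL(2, ℤ)) =
      transvection zero_ne_one 2 := Subtype.ext (coe_transvection_zero_one 2).symm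
  have hlower : (⟨!![1, 0; 2, 1], by norm_num [Matrix.det_fin_two_of]⟩ : SL(2, ℤ)) =
      transvection one_ne_zero 2 := Subtype.ext (coe_transvection_one_zero 2).symm
  rw [hupper, hlower, closure_neg_one_transvection_eq_Gamma_two]
  ext g
  exact mem_Gamma_iff_forall_apply
end

section
/- For all (a,b) ∈ ℝ² one has C(ι_x(a,b)) = σ_x(C(a,b)), C(ι_y(a,b)) = σ_y(C(a,b)) and C(ι_z(a,b)) = σ_z(C(a,b)); in other words, the map C semiconjugates the linear action of the three involutions ι_x, ι_y, ι_z on the torus ℝ²/ℤ² to the action of the tropical Vieta involutions σ_x, σ_y, σ_z on the tropical Kummer K3 surface. -/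
/-!
On the circle `ℝ / pℤ`, every point is `±` its own norm, and `‖x + y‖ + ‖x - y‖` does not see these
signs, so it can be computed at the numbers `‖x‖, ‖y‖ ∈ [0, p/2]`. This gives the parallelogram law
`‖x + y‖ + ‖x - y‖ = min (2 max(‖x‖, ‖y‖)) (p - 2 min(‖x‖, ‖y‖))`. In terms of `c = 4‖·‖ - p` the
law says `c (x + y) + c (x - y) = |c x - c y| - |c x + c y|`, so a Vieta involution exchanges
`c (x + y)` and `c (x - y)`. Each of the three semiconjugacies is this law at a suitable pair of
points, up to the evenness of `c`.
-/

lemma abs_sub_sub_abs_add_eq_min {G : Type*} [AddCommGroup G] [LinearOrder G]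
    [IsOrderedAddMonoid G] (a b : G) :
    |a - b| - |a + b| = min (2 • max a b) (-(2 • min a b)) := by
  rw [← max_sub_min_eq_abs', ← max_add_min a b, abs_eq_max_neg, ← min_sub_sub_left, min_comm]
  congr 1 <;> abel

lemma norm_add_add_norm_sub_congr_neg {E : Type*} [SeminormedAddCommGroup E] {x x' y y' : E}
    (hx : x = x' ∨ x = -x') (hy : y = y' ∨ y = -y') :
    ‖x + y‖ + ‖x - y‖ = ‖x' + y'‖ + ‖x' - y'‖ := by
  have neg_left (u v : E) : ‖-u + v‖ + ‖-u - v‖ = ‖u + v‖ + ‖u - v‖ := by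
    rw [neg_add_eq_sub, norm_sub_rev, ← neg_add', norm_neg, add_comm]
  have neg_right (u v : E) : ‖u + -v‖ + ‖u - -v‖ = ‖u + v‖ + ‖u - v‖ := by
    rw [← sub_eq_add_neg, sub_neg_eq_add, add_comm]
  rcases hx with rfl | rfl <;> rcases hy with rfl | rfl <;> simp only [neg_left, neg_right]

section Circle

variable {p : ℝ}

lemma addCircle_eq_coe_norm_or_eq_neg_coe_norm (x : AddCircle p) :
    x = (‖x‖ : ℝ) ∨ x = -((‖x‖ : ℝ) : AddCircle p) := by
  induction x using QuotientAddGroup.induction_on with | H r =>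
  set s : ℝ := r - round (p⁻¹ * r) * p with hs
  have hrs : (r : AddCircle p) = s := by
    rw [hs, ← zsmul_eq_mul, AddCircle.coe_sub, AddCircle.coe_zsmul, AddCircle.coe_period,
      smul_zero, sub_zero]
  rw [AddCircle.norm_eq, ← hs, hrs, ← AddCircle.coe_neg]
  rcases abs_choice s with h | h
  · exact .inl (by rw [h])
  · exact .inr (by rw [h, neg_neg])

lemma norm_addCircle_coe_eq_min {r : ℝ} (hr₀ : 0 ≤ r) (hrp : r ≤ p) :
    ‖(r : AddCircle p)‖ = min r (p - r) := by
  rcases hr₀.eq_or_lt with rfl | hr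
  · simp [hrp]
  have hp : 0 < p := hr.trans_le hrp
  have norm_of_le_half {s : ℝ} (hs₀ : 0 ≤ s) (hs : s ≤ p / 2) : ‖(s : AddCircle p)‖ = s := by
    rw [(AddCircle.norm_coe_eq_abs_iff p hp.ne').2 (by rwa [abs_of_nonneg hs₀, abs_of_pos hp]),
      abs_of_nonneg hs₀]
  rcases le_total r (p / 2) with h | h
  · rw [norm_of_le_half hr₀ h, min_eq_left (by linarith)]
  · have reflect : ‖(r : AddCircle p)‖ = ‖((p - r : ℝ) : AddCircle p)‖ := by
      rw [AddCircle.coe_sub, AddCircle.coe_period, zero_sub, norm_neg]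
    rw [reflect, norm_of_le_half (by linarith) (by linarith), min_eq_right (by linarith)]

lemma norm_addCircle_coe_add_add_norm_coe_sub {r s : ℝ} (hs₀ : 0 ≤ s) (hsr : s ≤ r)
    (hr : r ≤ p / 2) :
    ‖(r + s : AddCircle p)‖ + ‖(r - s : AddCircle p)‖ = min (2 * r) (p - 2 * s) := by
  have norm_add : ‖(r + s : AddCircle p)‖ = min (r + s) (p - (r + s)) := by
    rw [← AddCircle.coe_add, norm_addCircle_coe_eq_min (by linarith) (by linarith)]
  have norm_sub : ‖(r - s : AddCircle p)‖ = r - s := by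
    rw [← AddCircle.coe_sub, norm_addCircle_coe_eq_min (by linarith) (by linarith),
      min_eq_left (by linarith)]
  rw [norm_add, norm_sub, ← min_add_add_right]
  congr 1 <;> ring

theorem norm_addCircle_add_add_norm_sub_eq_min (hp : 0 < p) (x y : AddCircle p) :
    ‖x + y‖ + ‖x - y‖ = min (2 * max ‖x‖ ‖y‖) (p - 2 * min ‖x‖ ‖y‖) := by
  wlog hyx : ‖y‖ ≤ ‖x‖ generalizing x y
  · rw [add_comm x, norm_sub_rev, max_comm, min_comm ‖x‖]
    exact this y x (le_of_not_ge hyx)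
  have hx : ‖x‖ ≤ p / 2 := by
    simpa only [abs_of_pos hp] using AddCircle.norm_le_half_period p hp.ne' (x := x)
  rw [max_eq_left hyx, min_eq_right hyx,
    ← norm_addCircle_coe_add_add_norm_coe_sub (norm_nonneg y) hyx hx]
  exact norm_add_add_norm_sub_congr_neg (addCircle_eq_coe_norm_or_eq_neg_coe_norm x)
    (addCircle_eq_coe_norm_or_eq_neg_coe_norm y)

/-- The tropical cosine on the circle `ℝ / pℤ`; for `p = 1` it is `a ↦ 4·dist(a,ℤ) − 1`. The name
refers to `tropicalCos_add_add_tropicalCos_sub`, the analogue of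
`cos (x + y) + cos (x - y) = 2 cos x cos y`. -/
noncomputable def tropicalCos (x : AddCircle p) : ℝ := 4 * ‖x‖ - p

lemma tropicalCos_neg (x : AddCircle p) : tropicalCos (-x) = tropicalCos x := by
  simp only [tropicalCos, norm_neg]

theorem tropicalCos_add_add_tropicalCos_sub (hp : 0 < p) (x y : AddCircle p) :
    tropicalCos (x + y) + tropicalCos (x - y) =
      |tropicalCos x - tropicalCos y| - |tropicalCos x + tropicalCos y| := by
  have hmax : max (tropicalCos x) (tropicalCos y) = 4 * max ‖x‖ ‖y‖ - p := by
    rw [mul_max_of_nonneg _ _ zero_le_four, ← max_sub_sub_right]; rfl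
  have hmin : min (tropicalCos x) (tropicalCos y) = 4 * min ‖x‖ ‖y‖ - p := by
    rw [mul_min_of_nonneg _ _ zero_le_four, ← min_sub_sub_right]; rfl
  calc tropicalCos (x + y) + tropicalCos (x - y)
      = 4 * (‖x + y‖ + ‖x - y‖) - 2 * p := by simp only [tropicalCos]; ring
    _ = 4 * min (2 * max ‖x‖ ‖y‖) (p - 2 * min ‖x‖ ‖y‖) - 2 * p := by
      rw [norm_addCircle_add_add_norm_sub_eq_min hp]
    _ = min (2 • max (tropicalCos x) (tropicalCos y))
          (-(2 • min (tropicalCos x) (tropicalCos y))) := by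
      rw [hmax, hmin, mul_min_of_nonneg _ _ zero_le_four, ← min_sub_sub_right]
      congr 1 <;> ring
    _ = |tropicalCos x - tropicalCos y| - |tropicalCos x + tropicalCos y| :=
      (abs_sub_sub_abs_add_eq_min _ _).symm

theorem tropicalCos_add_two_nsmul (hp : 0 < p) (x y : AddCircle p) :
    tropicalCos (x + 2 • y) = -tropicalCos x - |tropicalCos y + tropicalCos (x + y)| +
      |tropicalCos y - tropicalCos (x + y)| := by
  have law := tropicalCos_add_add_tropicalCos_sub hp y (x + y)
  rw [show y + (x + y) = x + 2 • y by abel, show y - (x + y) = -x by abel, tropicalCos_neg] at law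
  linarith

theorem tropicalCos_neg_add (hp : 0 < p) (x y : AddCircle p) :
    tropicalCos (-x + y) = -tropicalCos (x + y) - |tropicalCos x + tropicalCos y| +
      |tropicalCos x - tropicalCos y| := by
  have law := tropicalCos_add_add_tropicalCos_sub hp x y
  rw [← tropicalCos_neg (x - y), neg_sub, ← neg_add_eq_sub] at law
  linarith

end Circle

/-- The map `C(a,b) = (c(a), c(b), c(a+b))`, where `c(a) = 4·dist(a,ℤ) − 1`,
semiconjugates the linear involutions `ι_x, ι_y, ι_z` of the torus to the tropical Vieta
involutions `σ_x, σ_y, σ_z` of the tropical Kummer K3 surface.  The distance from `a` to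
the nearest integer is `|a − round a|`. -/
theorem stmt_5 :
    let c : ℝ → ℝ := fun a => 4 * |a - round a| - 1
    let C : ℝ × ℝ → ℝ × ℝ × ℝ := fun p => (c p.1, c p.2, c (p.1 + p.2))
    let σx : ℝ × ℝ × ℝ → ℝ × ℝ × ℝ := fun q =>
      (-q.1 - |q.2.1 + q.2.2| + |q.2.1 - q.2.2|, q.2.1, q.2.2)
    let σy : ℝ × ℝ × ℝ → ℝ × ℝ × ℝ := fun q =>
      (q.1, -q.2.1 - |q.1 + q.2.2| + |q.1 - q.2.2|, q.2.2)
    let σz : ℝ × ℝ × ℝ → ℝ × ℝ × ℝ := fun q =>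
      (q.1, q.2.1, -q.2.2 - |q.1 + q.2.1| + |q.1 - q.2.1|)
    let ιx : ℝ × ℝ → ℝ × ℝ := fun p => (p.1 + 2 * p.2, -p.2)
    let ιy : ℝ × ℝ → ℝ × ℝ := fun p => (-p.1, 2 * p.1 + p.2)
    let ιz : ℝ × ℝ → ℝ × ℝ := fun p => (-p.1, p.2)
    ∀ p : ℝ × ℝ,
      C (ιx p) = σx (C p) ∧ C (ιy p) = σy (C p) ∧ C (ιz p) = σz (C p) := by
  intro c C σx σy σz ιx ιy ιz ⟨a, b⟩
  have c_eq (t : ℝ) : c t = tropicalCos (t : UnitAddCircle) := by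
    rw [tropicalCos, UnitAddCircle.norm_eq]
  have c_neg (t : ℝ) : c (-t) = c t := by
    rw [c_eq, c_eq, AddCircle.coe_neg, tropicalCos_neg]
  have c_add_two_mul (s t : ℝ) :
      c (s + 2 * t) = -c s - |c t + c (s + t)| + |c t - c (s + t)| := by
    rw [← Nat.cast_two, ← nsmul_eq_mul]
    simp only [c_eq, AddCircle.coe_add, AddCircle.coe_nsmul]
    exact tropicalCos_add_two_nsmul one_pos _ _
  have c_neg_add : c (-a + b) = -c (a + b) - |c a + c b| + |c a - c b| := by
    simp only [c_eq, AddCircle.coe_add, AddCircle.coe_neg]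
    exact tropicalCos_neg_add one_pos _ _
  refine ⟨Prod.ext (c_add_two_mul a b) (Prod.ext (c_neg b) ?_),
    Prod.ext (c_neg a) (Prod.ext ?_ ?_), Prod.ext (c_neg a) (Prod.ext rfl c_neg_add)⟩
  · exact congrArg c (by ring : a + 2 * b + -b = a + b)
  · change c (2 * a + b) = -c b - |c a + c (a + b)| + |c a - c (a + b)|
    rw [add_comm (2 * a), add_comm a, c_add_two_mul]
  · exact congrArg c (by ring : -a + (2 * a + b) = a + b)
end

section
/- The image of the map C : ℝ² → ℝ³ is exactly the tetrahedron { (x,y,z) ∈ ℝ³ : min( −x+y+z, x−y+z, x+y−z, −x−y−z ) = −1 }; in particular every point C(a,b) satisfies min( −x+y+z, x−y+z, x+y−z, −x−y−z ) = −1. -/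
/-! The function `c` is an affine function of the norm of the circle `AddCircle p` with `p = 1`. For
`x`, `y` on such a circle, the triple `(‖x‖, ‖y‖, ‖x + y‖)` satisfies the three triangle
inequalities, and replacing `x` and `y` by their antipodes, which preserves `x + y`, turns
`‖x + y‖ ≤ ‖x‖ + ‖y‖` into `‖x‖ + ‖y‖ + ‖x + y‖ ≤ |p|`. To see that one of these is an equality,
lift `x`, `y`, `-(x + y)` to reals with the same absolute values. If the lifts sum to `0`, one
triangle inequality is an equality; otherwise they sum to a nonzero multiple of `p`, which forces
`‖x‖ + ‖y‖ + ‖x + y‖ = |p|`. Conversely, a point `(u, v, w)` on the faces `w = u + v` and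
`u + v + w = |p|` comes from `(u, v)`, one on the other two faces from `(u, -v)`. -/

/-- The boundary of the tetrahedron with vertices `(0, 0, 0)`, `(0, p/2, p/2)`, `(p/2, 0, p/2)`,
`(p/2, p/2, 0)`, for `0 ≤ p`: the tropical Kummer surface in coordinates in which each of the three
entries is a norm on a circle of length `p`. -/
def kummerTetrahedron (p : ℝ) : Set (ℝ × ℝ × ℝ) :=
  {q | min (min (-q.1 + q.2.1 + q.2.2) (q.1 - q.2.1 + q.2.2))
    (min (q.1 + q.2.1 - q.2.2) (p - q.1 - q.2.1 - q.2.2)) = 0}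

lemma mem_kummerTetrahedron_iff {p u v w : ℝ} :
    (u, v, w) ∈ kummerTetrahedron p ↔
      (u ≤ v + w ∧ v ≤ u + w ∧ w ≤ u + v ∧ u + v + w ≤ p) ∧
        (u = v + w ∨ v = u + w ∨ w = u + v ∨ u + v + w = p) := by
  simp only [kummerTetrahedron, Set.mem_ofPred_eq]
  grind

lemma image_kummerTetrahedron_one :
    (fun q : ℝ × ℝ × ℝ => (4 * q.1 - 1, 4 * q.2.1 - 1, 4 * q.2.2 - 1)) '' kummerTetrahedron 1 =
      {q | min (min (-q.1 + q.2.1 + q.2.2) (q.1 - q.2.1 + q.2.2))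
        (min (q.1 + q.2.1 - q.2.2) (-q.1 - q.2.1 - q.2.2)) = -1} := by
  ext ⟨x, y, z⟩
  simp only [Set.mem_image, Set.mem_ofPred_eq]
  constructor
  · rintro ⟨⟨u, v, w⟩, hq, hxyz⟩
    rw [mem_kummerTetrahedron_iff] at hq
    grind
  · intro hmin
    refine ⟨((x + 1) / 4, (y + 1) / 4, (z + 1) / 4), ?_, by ring_nf⟩
    rw [mem_kummerTetrahedron_iff]
    grind

lemma abs_eq_add_abs_of_add_add_eq_zero {r s t : ℝ} (h : r + s + t = 0) :
    |r| = |s| + |t| ∨ |s| = |r| + |t| ∨ |t| = |r| + |s| := by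
  grind

section Circle

variable {p : ℝ}

lemma exists_coe_eq_abs_eq_norm (x : AddCircle p) :
    ∃ s : ℝ, (s : AddCircle p) = x ∧ |s| = ‖x‖ := by
  induction x using QuotientAddGroup.induction_on with
  | H a =>
    refine ⟨a - round (p⁻¹ * a) * p, ?_, (AddCircle.norm_eq p).symm⟩
    rw [← zsmul_eq_mul, AddCircle.coe_sub, AddCircle.coe_zsmul, AddCircle.coe_period, smul_zero,
      sub_zero]

lemma norm_add_half_period (hp : p ≠ 0) (x : AddCircle p) :
    ‖x + (p / 2 : ℝ)‖ = |p| / 2 - ‖x‖ := by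
  apply le_antisymm
  · obtain ⟨s, rfl, hs⟩ := exists_coe_eq_abs_eq_norm x
    have hle : |s| ≤ |p| / 2 := hs ▸ AddCircle.norm_le_half_period p hp
    have hadd : ‖(s : AddCircle p) + (p / 2 : ℝ)‖ ≤ |s + p / 2| :=
      QuotientAddGroup.norm_mk_le_norm
    have hsub : ‖(s : AddCircle p) + (p / 2 : ℝ)‖ ≤ |s - p / 2| := by
      have hcoe : (s : AddCircle p) + (p / 2 : ℝ) = (s - p / 2 : ℝ) := by
        rw [← AddCircle.coe_add, ← AddCircle.coe_add_period p (s - p / 2)]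
        ring_nf
      exact hcoe ▸ QuotientAddGroup.norm_mk_le_norm
    have hmin : |s + p / 2| = |p| / 2 - |s| ∨ |s - p / 2| = |p| / 2 - |s| := by grind
    grind
  · rw [sub_le_iff_le_add, ← AddCircle.norm_half_period_eq]
    exact norm_le_add_norm_add' x _

lemma norm_add_norm_add_norm_add_le_period (hp : p ≠ 0) (x y : AddCircle p) :
    ‖x‖ + ‖y‖ + ‖x + y‖ ≤ |p| := by
  have hantipodes : (x + (p / 2 : ℝ)) + (y + (p / 2 : ℝ)) = x + y := by
    rw [add_add_add_comm, ← AddCircle.coe_add, add_halves, AddCircle.coe_period, add_zero]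
  have htriangle := norm_add_le (x + (p / 2 : ℝ)) (y + (p / 2 : ℝ))
  rw [hantipodes, norm_add_half_period hp, norm_add_half_period hp] at htriangle
  linarith

lemma norm_eq_add_norm_or_add_norm_eq_period (hp : p ≠ 0) (x y : AddCircle p) :
    ‖x‖ = ‖y‖ + ‖x + y‖ ∨ ‖y‖ = ‖x‖ + ‖x + y‖ ∨ ‖x + y‖ = ‖x‖ + ‖y‖ ∨
      ‖x‖ + ‖y‖ + ‖x + y‖ = |p| := by
  have hle := norm_add_norm_add_norm_add_le_period hp x y
  obtain ⟨r, hr, hrx⟩ := exists_coe_eq_abs_eq_norm x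
  obtain ⟨s, hs, hsy⟩ := exists_coe_eq_abs_eq_norm y
  obtain ⟨t, ht, htxy⟩ := exists_coe_eq_abs_eq_norm (-(x + y))
  obtain ⟨n, hn⟩ : ∃ n : ℤ, n • p = r + s + t := by
    rw [← AddCircle.coe_eq_zero_iff, AddCircle.coe_add, AddCircle.coe_add, hr, hs, ht,
      add_neg_cancel]
  rw [norm_neg] at htxy
  rw [← hrx, ← hsy, ← htxy] at hle ⊢
  rcases eq_or_ne n 0 with rfl | hn0
  · have := abs_eq_add_abs_of_add_add_eq_zero (hn.symm.trans (zero_smul ℤ p))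
    tauto
  · have hge : |p| ≤ |r| + |s| + |t| := calc
      |p| ≤ |(n : ℝ)| * |p| :=
        le_mul_of_one_le_left (abs_nonneg p) (mod_cast Int.one_le_abs hn0)
      _ = |r + s + t| := by rw [← hn, zsmul_eq_mul, abs_mul]
      _ ≤ |r| + |s| + |t| := abs_add_three r s t
    exact .inr (.inr (.inr (le_antisymm hle hge)))

lemma norm_mem_kummerTetrahedron (hp : p ≠ 0) (x y : AddCircle p) :
    (‖x‖, ‖y‖, ‖x + y‖) ∈ kummerTetrahedron |p| := by
  have hx : ‖x‖ ≤ ‖y‖ + ‖x + y‖ := add_comm ‖x + y‖ ‖y‖ ▸ norm_le_add_norm_add x y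
  have hy : ‖y‖ ≤ ‖x‖ + ‖x + y‖ := add_comm ‖x + y‖ ‖x‖ ▸ norm_le_add_norm_add' x y
  exact mem_kummerTetrahedron_iff.2
    ⟨⟨hx, hy, norm_add_le x y, norm_add_norm_add_norm_add_le_period hp x y⟩,
      norm_eq_add_norm_or_add_norm_eq_period hp x y⟩

lemma norm_coe_eq_self_of_nonneg_of_le (hp : p ≠ 0) {u : ℝ} (hu₀ : 0 ≤ u) (hu : u ≤ |p| / 2) :
    ‖(u : AddCircle p)‖ = u := by
  rw [(AddCircle.norm_coe_eq_abs_iff p hp).2 (by rwa [abs_of_nonneg hu₀]), abs_of_nonneg hu₀]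

lemma coe_abs_period : ((|p| : ℝ) : AddCircle p) = 0 := by
  rcases abs_choice p with h | h
  · rw [h, AddCircle.coe_period]
  · rw [h, AddCircle.coe_neg, AddCircle.coe_period, neg_zero]

lemma exists_norm_eq_of_mem_kummerTetrahedron (hp : p ≠ 0) {u v w : ℝ}
    (h : (u, v, w) ∈ kummerTetrahedron |p|) :
    ∃ x y : AddCircle p, ‖x‖ = u ∧ ‖y‖ = v ∧ ‖x + y‖ = w := by
  obtain ⟨⟨hu, hv, hw, hperimeter⟩, hface⟩ := mem_kummerTetrahedron_iff.1 h
  have hnu : ‖(u : AddCircle p)‖ = u :=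
    norm_coe_eq_self_of_nonneg_of_le hp (by linarith) (by linarith)
  have hnv : ‖(v : AddCircle p)‖ = v :=
    norm_coe_eq_self_of_nonneg_of_le hp (by linarith) (by linarith)
  have hnw : ‖(w : AddCircle p)‖ = w :=
    norm_coe_eq_self_of_nonneg_of_le hp (by linarith) (by linarith)
  rcases hface with hface | hface | hface | hface
  · refine ⟨u, -v, hnu, by rwa [norm_neg], ?_⟩
    rwa [← sub_eq_add_neg, ← AddCircle.coe_sub, hface, add_sub_cancel_left]
  · refine ⟨u, -v, hnu, by rwa [norm_neg], ?_⟩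
    rwa [hface, AddCircle.coe_add, neg_add, add_neg_cancel_left, norm_neg]
  · refine ⟨u, v, hnu, hnv, ?_⟩
    rwa [← AddCircle.coe_add, ← hface]
  · refine ⟨u, v, hnu, hnv, ?_⟩
    rwa [← AddCircle.coe_add, eq_sub_of_add_eq hface, AddCircle.coe_sub, coe_abs_period, zero_sub,
      norm_neg]

theorem range_norm_eq_kummerTetrahedron (hp : p ≠ 0) :
    Set.range (fun q : AddCircle p × AddCircle p => (‖q.1‖, ‖q.2‖, ‖q.1 + q.2‖)) =
      kummerTetrahedron |p| := by
  ext ⟨u, v, w⟩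
  constructor
  · rintro ⟨⟨x, y⟩, hxy⟩
    exact hxy ▸ norm_mem_kummerTetrahedron hp x y
  · intro h
    obtain ⟨x, y, rfl, rfl, rfl⟩ := exists_norm_eq_of_mem_kummerTetrahedron hp h
    exact ⟨(x, y), rfl⟩

end Circle

/-- The image of `C(a,b) = (c(a), c(b), c(a+b))`, with
`c(a) = 4·dist(a,ℤ) − 1`, is exactly the tetrahedron
`{ (x,y,z) : min(−x+y+z, x−y+z, x+y−z, −x−y−z) = −1 }` (the tropical Kummer K3 surface);
in particular every point `C(a,b)` satisfies this equation. -/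
theorem stmt_6 :
    let c : ℝ → ℝ := fun a => 4 * |a - round a| - 1
    let C : ℝ × ℝ → ℝ × ℝ × ℝ := fun p => (c p.1, c p.2, c (p.1 + p.2))
    let K : Set (ℝ × ℝ × ℝ) := {q : ℝ × ℝ × ℝ |
      min (min (-q.1 + q.2.1 + q.2.2) (q.1 - q.2.1 + q.2.2))
        (min (q.1 + q.2.1 - q.2.2) (-q.1 - q.2.1 - q.2.2)) = -1}
    Set.range C = K ∧ ∀ p : ℝ × ℝ, C p ∈ K := by
  intro c C K
  let N : UnitAddCircle × UnitAddCircle → ℝ × ℝ × ℝ := fun q => (‖q.1‖, ‖q.2‖, ‖q.1 + q.2‖)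
  let A : ℝ × ℝ × ℝ → ℝ × ℝ × ℝ := fun q => (4 * q.1 - 1, 4 * q.2.1 - 1, 4 * q.2.2 - 1)
  let π : ℝ → UnitAddCircle := fun a => a
  have hπ : Function.Surjective π := QuotientAddGroup.mk_surjective
  have hC : C = A ∘ N ∘ Prod.map π π := by
    funext p
    simp only [C, c, A, N, π, Function.comp_apply, Prod.map_fst, Prod.map_snd,
      ← AddCircle.coe_add, UnitAddCircle.norm_eq]
  have hrange : Set.range C = K := calc
    Set.range C = A '' Set.range N := by
      rw [hC, Set.range_comp, (hπ.prodMap hπ).range_comp]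
    _ = A '' kummerTetrahedron 1 := by
      rw [range_norm_eq_kummerTetrahedron one_ne_zero, abs_one]
    _ = K := image_kummerTetrahedron_one
  exact ⟨hrange, fun p => hrange ▸ Set.mem_range_self p⟩
end

section
/- If ξ belongs to the cone 𝒞 then the pullback ξ ∘ F also belongs to 𝒞; that is, the transformation F preserves the cone of tropical-positive polynomials. -/
/-- A function `ξ : ℝ² → ℝ` is a tropical-positive polynomial if it is a minimum of a
nonempty finite family of affine functions `a·X₀ + b·X₁ + c` with `a ≥ 0` and `b ≥ 0`.
These functions form the cone `𝒞`. -/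
def TropPos (ξ : ℝ × ℝ → ℝ) : Prop :=
  ∃ (s : Finset ℕ) (hs : s.Nonempty) (a b c : ℕ → ℝ),
    (∀ α ∈ s, 0 ≤ a α ∧ 0 ≤ b α) ∧
    ∀ X : ℝ × ℝ, ξ X = s.inf' hs fun α => a α * X.1 + b α * X.2 + c α

/-!
Tropical-positive polynomials are the finite minima of elements of a convex cone, the cone of affine
functions with nonnegative coefficients. Sums and nonnegative multiples distribute over minima, so
the finite minima of elements of a convex cone again form a convex cone. Hence the functions whose
pullback along `F` is tropical-positive form a convex cone closed under minima, and such a cone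
contains every tropical-positive polynomial as soon as it contains the coordinate functions and the
constants; the pullbacks of the coordinate functions are the components of `F`.
-/

section InfClosure

open scoped Pointwise

theorem infClosure_add_subset {M : Type*} [AddGroup M] [Lattice M] [AddLeftMono M]
    [AddRightMono M] (s t : Set M) : infClosure s + infClosure t ⊆ infClosure (s + t) := by
  have add_mem_of_mem {x y : M} (hx : x ∈ s) (hy : y ∈ infClosure t) :
      x + y ∈ infClosure (s + t) := by
    refine infClosure_min (t := (x + ·) ⁻¹' infClosure (s + t))
      (fun v hv => subset_infClosure (Set.add_mem_add hx hv)) (fun v hv w hw => ?_) hy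
    simpa only [Set.mem_preimage, add_inf] using infClosed_infClosure hv hw
  rintro _ ⟨x, hx, y, hy, rfl⟩
  refine infClosure_min (t := (· + y) ⁻¹' infClosure (s + t))
    (fun u hu => add_mem_of_mem hu hy) (fun u hu v hv => ?_) hx
  simpa only [Set.mem_preimage, inf_add] using infClosed_infClosure hu hv

variable {𝕜 M : Type*} [Semifield 𝕜] [LinearOrder 𝕜] [IsStrictOrderedRing 𝕜]
  [AddCommMonoid M] [SemilatticeInf M] [Module 𝕜 M] [PosSMulMono 𝕜 M]

theorem smul_inf_of_nonneg {c : 𝕜} (hc : 0 ≤ c) (x y : M) : c • (x ⊓ y) = c • x ⊓ c • y := by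
  rcases hc.eq_or_lt with rfl | hc
  · simp only [zero_smul, inf_idem]
  · exact map_inf (OrderIso.smulRight hc) x y

theorem smul_infClosure_subset {c : 𝕜} (hc : 0 ≤ c) (s : Set M) :
    c • infClosure s ⊆ infClosure (c • s) := by
  rintro _ ⟨x, hx, rfl⟩
  refine infClosure_min (t := (c • ·) ⁻¹' infClosure (c • s))
    (fun u hu => subset_infClosure (Set.smul_mem_smul_set hu)) (fun u hu v hv => ?_) hx
  simpa only [Set.mem_preimage, smul_inf_of_nonneg hc] using infClosed_infClosure hu hv

end InfClosure

section InfCone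

variable {𝕜 M : Type*} [Field 𝕜] [LinearOrder 𝕜] [IsStrictOrderedRing 𝕜]
  [AddCommGroup M] [Lattice M] [IsOrderedAddMonoid M] [Module 𝕜 M] [PosSMulMono 𝕜 M]

/-- The smallest cone closed under `⊓` that contains the pointed cone `K`: it consists of the finite
infima of elements of `K`. -/
def infCone (K : PointedCone 𝕜 M) : PointedCone 𝕜 M where
  carrier := infClosure K
  zero_mem' := subset_infClosure K.zero_mem
  add_mem' hx hy := infClosure_mono (Set.add_subset_iff.2 fun _ hu _ hv => K.add_mem hu hv)
    (infClosure_add_subset _ _ (Set.add_mem_add hx hy))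
  smul_mem' c _ hx := infClosure_mono (Set.smul_set_subset_iff.2 fun _ hu => K.smul_mem c.2 hu)
    (smul_infClosure_subset c.2 _ (Set.smul_mem_smul_set hx))

theorem le_infCone (K : PointedCone 𝕜 M) : K ≤ infCone K :=
  fun _ hx => subset_infClosure hx

theorem infClosed_infCone (K : PointedCone 𝕜 M) : InfClosed (infCone K : Set M) :=
  infClosed_infClosure

theorem infCone_le {K L : PointedCone 𝕜 M} (hKL : K ≤ L) (hL : InfClosed (L : Set M)) :
    infCone K ≤ L :=
  infClosure_min hKL hL

theorem mem_infCone_iff {K : PointedCone 𝕜 M} {x : M} :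
    x ∈ infCone K ↔ ∃ (s : Finset M) (hs : s.Nonempty), (∀ y ∈ s, y ∈ K) ∧ s.inf' hs id = x :=
  Iff.rfl

end InfCone

section TropicalCone

variable {𝕜 Ω Ω' : Type*} [Field 𝕜] [LinearOrder 𝕜] [IsStrictOrderedRing 𝕜]

/-- The affine functions on `Ω` in the coordinate functions `S`, with nonnegative coefficients and
a constant term of arbitrary sign. -/
def positiveAffine (S : Set (Ω → 𝕜)) : PointedCone 𝕜 (Ω → 𝕜) :=
  PointedCone.hull 𝕜 S ⊔ PointedCone.ofSubmodule (Submodule.span 𝕜 {1})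

/-- The tropical-positive polynomials on `Ω` in the coordinate functions `S`. The set `S` takes the
place of the coordinates `X₀, X₁`, so that any number of variables is allowed. -/
def tropicalCone (S : Set (Ω → 𝕜)) : PointedCone 𝕜 (Ω → 𝕜) :=
  infCone (positiveAffine S)

theorem mem_positiveAffine_pair {x y f : Ω → 𝕜} :
    f ∈ positiveAffine {x, y} ↔
      ∃ a b c : 𝕜, (0 ≤ a ∧ 0 ≤ b) ∧ ∀ X, f X = a * x X + b * y X + c := by
  constructor
  · intro hf
    obtain ⟨g, hg, h, hh, rfl⟩ := Submodule.mem_sup.1 hf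
    obtain ⟨a, b, rfl⟩ := Submodule.mem_span_pair.1 hg
    obtain ⟨c, rfl⟩ := Submodule.mem_span_singleton.1 hh
    exact ⟨a, b, c, ⟨a.2, b.2⟩, fun X => by simp [← Nonneg.coe_smul]⟩
  · rintro ⟨a, b, c, ⟨ha, hb⟩, hf⟩
    refine Submodule.mem_sup.2 ⟨_, Submodule.mem_span_pair.2 ⟨⟨a, ha⟩, ⟨b, hb⟩, rfl⟩,
      _, Submodule.mem_span_singleton.2 ⟨c, rfl⟩, ?_⟩
    ext X
    simp [hf]

theorem stmt_8_general {S : Set (Ω → 𝕜)} {T : Set (Ω' → 𝕜)} {F : Ω → Ω'}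
    (hF : ∀ y ∈ T, y ∘ F ∈ tropicalCone S) {ξ : Ω' → 𝕜} (hξ : ξ ∈ tropicalCone T) :
    ξ ∘ F ∈ tropicalCone S := by
  let pullbackCone := (tropicalCone S).comap (LinearMap.funLeft 𝕜 𝕜 F)
  have coordinates_le : PointedCone.hull 𝕜 T ≤ pullbackCone := Submodule.span_le.2 hF
  have constants_le : PointedCone.ofSubmodule (Submodule.span 𝕜 {1}) ≤ pullbackCone := by
    intro f hf
    obtain ⟨c, rfl⟩ := Submodule.mem_span_singleton.1 hf
    exact le_infCone _ (Submodule.mem_sup_right (Submodule.mem_span_singleton.2 ⟨c, rfl⟩))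
  have pullbackCone_infClosed : InfClosed (pullbackCone : Set (Ω' → 𝕜)) :=
    fun _ hg _ hh => infClosed_infCone _ hg hh
  exact infCone_le (sup_le coordinates_le constants_le) pullbackCone_infClosed hξ

end TropicalCone

theorem tropPos_inf' {ι : Type*} {s : Finset ι} (hs : s.Nonempty) {a b c : ι → ℝ}
    (hab : ∀ i ∈ s, 0 ≤ a i ∧ 0 ≤ b i) :
    TropPos fun X => s.inf' hs fun i => a i * X.1 + b i * X.2 + c i := by
  classical
  have : Nonempty ι := hs.to_type
  obtain ⟨f, hf⟩ := Set.countable_iff_exists_injOn.1 s.countable_toSet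
  let g := Function.invFunOn f s
  have hgf : ∀ i ∈ s, g (f i) = i := hf.leftInvOn_invFunOn
  refine ⟨s.image f, hs.image f, a ∘ g, b ∘ g, c ∘ g, ?_, fun X => ?_⟩
  · refine Finset.forall_mem_image.2 fun i hi => ?_
    simpa only [Function.comp_apply, hgf i hi] using hab i hi
  · rw [Finset.inf'_image]
    refine Finset.inf'_congr hs rfl fun i hi => ?_
    simp only [Function.comp_apply, hgf i hi]

theorem tropPos_iff_mem_tropicalCone {ξ : ℝ × ℝ → ℝ} :
    TropPos ξ ↔ ξ ∈ tropicalCone {Prod.fst, Prod.snd} := by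
  constructor
  · rintro ⟨s, hs, a, b, c, hab, hξ⟩
    have ξ_eq : ξ = s.inf' hs fun i X => a i * X.1 + b i * X.2 + c i := by
      ext X
      rw [hξ, Finset.inf'_apply]
    rw [ξ_eq]
    exact (infClosed_infCone _).finsetInf'_mem hs fun i hi =>
      le_infCone _ (mem_positiveAffine_pair.2 ⟨a i, b i, c i, hab i hi, fun _ => rfl⟩)
  · intro hξ
    obtain ⟨s, hs, hsK, rfl⟩ := mem_infCone_iff.1 hξ
    choose! a b c hab h_affine using fun f hf => mem_positiveAffine_pair.1 (hsK f hf)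
    convert tropPos_inf' hs (c := c) hab using 2 with X
    rw [Finset.inf'_apply]
    exact Finset.inf'_congr hs rfl fun f hf => h_affine f hf X

/-- A transformation `F = (F₀, F₁)` of `ℝ²` whose components are minima of
nonempty finite families of affine functions with nonnegative coefficients preserves the
cone `𝒞` of tropical-positive polynomials: if `ξ ∈ 𝒞` then `ξ ∘ F ∈ 𝒞`. -/
theorem stmt_8 (F₀ F₁ : ℝ × ℝ → ℝ) (h₀ : TropPos F₀) (h₁ : TropPos F₁)
    (ξ : ℝ × ℝ → ℝ) (hξ : TropPos ξ) :
    TropPos (fun X => ξ (F₀ X, F₁ X)) := by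
  rw [tropPos_iff_mem_tropicalCone] at h₀ h₁ hξ ⊢
  exact stmt_8_general (F := fun X => (F₀ X, F₁ X)) (by rintro _ (rfl | rfl); exacts [h₀, h₁]) hξ
end

section
/- There exists a unique function G : ℝ² → ℝ which simultaneously: (i) is homogeneous of degree 1, i.e. G(X₀+t, X₁+t) = G(X₀,X₁) + t for all t ∈ ℝ; (ii) is concave, nondecreasing in each variable, and the limits of G(X₀,X₁) − min(X₀,X₁) as X₁−X₀ → +∞ and as X₀−X₁ → +∞ exist and are finite real numbers; (iii) satisfies the functional equation G(F(X₀,X₁)) = n·G(X₀,X₁) for all (X₀,X₁) ∈ ℝ². -/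
/-!
The potential is Tate's limit `G X = lim min (F^k X) / n^k`, the min-plus form of a canonical
height. Since all terms of `F` have weights `a + b = n` and both pure terms `(n, 0)` and `(0, n)`
occur, `min (F X)` stays within a bounded distance of `n * min X`, so the sequence is Cauchy with
geometric rate and its limit stays within a bounded distance of `min`. Homogeneity, monotonicity
and concavity pass from `F` and `min` to the iterates and then to the limit.

On each side of the diagonal, `G - min` is a monotone function of the distance to the diagonal, so
its two limits are finite exactly when `G - min` is bounded. Uniqueness follows: the difference `D`
of two potentials is bounded and satisfies `D (F^k X) = n^k * D X`.
-/

open Filter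

section TateLimit

variable {α : Type*} {F : α → α} {h : α → ℝ} {ρ C : ℝ}

/-- Tate's limit `lim h (F^k x) / ρ^k`: the canonical height attached to a dynamical system `F` and
a function `h` which `F` multiplies by `ρ` up to a bounded error. -/
noncomputable def tateLimit (F : α → α) (h : α → ℝ) (ρ : ℝ) (x : α) : ℝ :=
  limUnder atTop fun k : ℕ => h (F^[k] x) / ρ ^ k

lemma dist_div_pow_iterate_succ_le (hρ : 0 < ρ) (hC : ∀ x, |h (F x) - ρ * h x| ≤ C) (x : α)
    (k : ℕ) :
    dist (h (F^[k] x) / ρ ^ k) (h (F^[k + 1] x) / ρ ^ (k + 1)) ≤ C / ρ * ρ⁻¹ ^ k := by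
  have hdiff : h (F^[k + 1] x) / ρ ^ (k + 1) - h (F^[k] x) / ρ ^ k =
      (h (F (F^[k] x)) - ρ * h (F^[k] x)) / ρ ^ (k + 1) := by
    rw [Function.iterate_succ_apply', sub_div, pow_succ', mul_div_mul_left _ _ hρ.ne']
  calc dist (h (F^[k] x) / ρ ^ k) (h (F^[k + 1] x) / ρ ^ (k + 1))
      = |h (F (F^[k] x)) - ρ * h (F^[k] x)| / ρ ^ (k + 1) := by
        rw [dist_comm, Real.dist_eq, hdiff, abs_div, abs_of_pos (pow_pos hρ _)]
    _ ≤ C / ρ ^ (k + 1) := by gcongr; exact hC _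
    _ = C / ρ * ρ⁻¹ ^ k := by rw [pow_succ', ← div_div, div_eq_mul_inv _ (ρ ^ k), inv_pow]

lemma tendsto_tateLimit (hρ : 1 < ρ) (hC : ∀ x, |h (F x) - ρ * h x| ≤ C) (x : α) :
    Tendsto (fun k : ℕ => h (F^[k] x) / ρ ^ k) atTop (nhds (tateLimit F h ρ x)) :=
  have hρ₀ : 0 < ρ := one_pos.trans hρ
  (cauchySeq_of_le_geometric _ _ (inv_lt_one_of_one_lt₀ hρ)
    (dist_div_pow_iterate_succ_le hρ₀ hC x)).tendsto_limUnder

lemma abs_tateLimit_sub_le (hρ : 1 < ρ) (hC : ∀ x, |h (F x) - ρ * h x| ≤ C) (x : α) :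
    |tateLimit F h ρ x - h x| ≤ C / (ρ - 1) := by
  have hρ₀ : 0 < ρ := one_pos.trans hρ
  have hdist := dist_le_of_le_geometric_of_tendsto₀ _ _ (inv_lt_one_of_one_lt₀ hρ)
    (dist_div_pow_iterate_succ_le hρ₀ hC x) (tendsto_tateLimit hρ hC x)
  have hsum : C / ρ / (1 - ρ⁻¹) = C / (ρ - 1) := by
    rw [div_div, mul_sub, mul_one, mul_inv_cancel₀ hρ₀.ne']
  rw [dist_comm, Real.dist_eq, hsum] at hdist
  simpa using hdist

lemma tateLimit_map (hρ : 1 < ρ) (hC : ∀ x, |h (F x) - ρ * h x| ≤ C) (x : α) :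
    tateLimit F h ρ (F x) = ρ * tateLimit F h ρ x := by
  have hshift := ((tendsto_add_atTop_iff_nat 1).2 (tendsto_tateLimit hρ hC x)).const_mul ρ
  refine tendsto_nhds_unique (tendsto_tateLimit hρ hC (F x)) (hshift.congr fun k => ?_)
  rw [Function.iterate_succ_apply, pow_succ']
  field_simp

lemma monotone_tateLimit [Preorder α] (hρ : 1 < ρ) (hC : ∀ x, |h (F x) - ρ * h x| ≤ C)
    (hF : Monotone F) (hh : Monotone h) : Monotone (tateLimit F h ρ) := fun x y hxy =>
  le_of_tendsto_of_tendsto' (tendsto_tateLimit hρ hC x) (tendsto_tateLimit hρ hC y) fun k =>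
    div_le_div_of_nonneg_right (hh (hF.iterate k hxy)) (by positivity)

lemma eq_zero_of_map_eq_mul_of_abs_le {D : α → ℝ} {K : ℝ} (hρ : 1 < ρ)
    (hD : ∀ x, D (F x) = ρ * D x) (hK : ∀ x, |D x| ≤ K) (x : α) : D x = 0 := by
  have hiter (k : ℕ) : D (F^[k] x) = ρ ^ k * D x := by
    induction k with
    | zero => simp
    | succ k ih => rw [Function.iterate_succ_apply', hD, ih, pow_succ', mul_assoc]
  by_contra hne
  obtain ⟨k, hk⟩ := pow_unbounded_of_one_lt (K / |D x|) hρ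
  rw [div_lt_iff₀ (abs_pos.2 hne)] at hk
  have hle := hK (F^[k] x)
  rw [hiter, abs_mul, abs_of_pos (by positivity)] at hle
  exact hk.not_ge hle

end TateLimit

section Concave

variable {E β γ : Type*} [AddCommGroup E] [Module ℝ E] [AddCommGroup β] [PartialOrder β]
  [Module ℝ β] [AddCommGroup γ] [PartialOrder γ] [Module ℝ γ]

-- `ConcaveOn.comp` asks for concavity on the image of `f`, which need not be convex.
lemma concaveOn_comp_of_monotone {s : Set E} {f : E → β} {g : β → γ}
    (hg : ConcaveOn ℝ Set.univ g) (hmono : Monotone g) (hf : ConcaveOn ℝ s f) :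
    ConcaveOn ℝ s (g ∘ f) :=
  ⟨hf.1, fun _ hx _ hy _ _ hp hq hpq =>
    (hg.2 (Set.mem_univ _) (Set.mem_univ _) hp hq hpq).trans (hmono (hf.2 hx hy hp hq hpq))⟩

lemma concaveOn_iterate {F : β → β} (hF : ConcaveOn ℝ Set.univ F) (hmono : Monotone F) (k : ℕ) :
    ConcaveOn ℝ Set.univ F^[k] := by
  induction k with
  | zero => exact concaveOn_id convex_univ
  | succ k ih =>
    rw [Function.iterate_succ']
    exact concaveOn_comp_of_monotone hF hmono ih

lemma concaveOn_prodMk {s : Set E} {f : E → β} {g : E → γ} (hf : ConcaveOn ℝ s f)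
    (hg : ConcaveOn ℝ s g) : ConcaveOn ℝ s fun x => (f x, g x) :=
  ⟨hf.1, fun _ hx _ hy _ _ hp hq hpq =>
    Prod.mk_le_mk.2 ⟨hf.2 hx hy hp hq hpq, hg.2 hx hy hp hq hpq⟩⟩

lemma concaveOn_finset_inf' {ι : Type*} {t : Finset ι} (ht : t.Nonempty) {s : Set E}
    {f : ι → E → ℝ} (hf : ∀ j ∈ t, ConcaveOn ℝ s (f j)) :
    ConcaveOn ℝ s fun x => t.inf' ht fun j => f j x := by
  simpa only [← Finset.inf'_apply] using
    Finset.inf'_induction ht f (p := ConcaveOn ℝ s) (fun _ h₁ _ h₂ => h₁.inf h₂) hf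

lemma concaveOn_tateLimit {F : β → β} {h : β → ℝ} {ρ C : ℝ} (hρ : 1 < ρ)
    (hC : ∀ x, |h (F x) - ρ * h x| ≤ C) (hF : ConcaveOn ℝ Set.univ F) (hFmono : Monotone F)
    (hh : ConcaveOn ℝ Set.univ h) (hhmono : Monotone h) :
    ConcaveOn ℝ Set.univ (tateLimit F h ρ) := by
  refine isClosed_setOfPred_concaveOn.mem_of_tendsto
    (tendsto_pi_nhds.2 (tendsto_tateLimit hρ hC)) (Eventually.of_forall fun k => ?_)
  have hk := concaveOn_comp_of_monotone hh hhmono (concaveOn_iterate hF hFmono k)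
  simpa only [div_eq_inv_mul, smul_eq_mul, Function.comp_apply, Set.mem_ofPred_eq] using
    hk.smul (show 0 ≤ (ρ ^ k)⁻¹ by positivity)

end Concave

lemma monotone_finset_inf' {ι α β : Type*} [Preorder α] [SemilatticeInf β] {t : Finset ι}
    (ht : t.Nonempty) {f : ι → α → β} (hf : ∀ j ∈ t, Monotone (f j)) :
    Monotone fun x => t.inf' ht fun j => f j x := fun _ _ hxy =>
  Finset.inf'_mono_fun fun j hj => hf j hj hxy

/-- `f` carries the translation by `t • u` to the translation by `t • v`. For maps of the plane,
`u = (1, 1)` and `v = ρ • (1, 1)` express homogeneity of degree `ρ` in the min-plus sense; for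
real-valued functions, `v = ρ` does. -/
def IsTranslationEquivariant {E E' : Type*} [AddCommGroup E] [Module ℝ E] [AddCommGroup E']
    [Module ℝ E'] (u : E) (v : E') (f : E → E') : Prop :=
  ∀ (x : E) (t : ℝ), f (x + t • u) = f x + t • v

namespace IsTranslationEquivariant

variable {E E' E'' : Type*} [AddCommGroup E] [Module ℝ E] [AddCommGroup E'] [Module ℝ E']
  [AddCommGroup E''] [Module ℝ E''] {u : E} {v : E'} {w : E''}

lemma comp {g : E' → E''} {f : E → E'} (hg : IsTranslationEquivariant v w g)
    (hf : IsTranslationEquivariant u v f) : IsTranslationEquivariant u w (g ∘ f) := fun x t => by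
  rw [Function.comp_apply, hf, hg, Function.comp_apply]

lemma smul {f : E → E'} (hf : IsTranslationEquivariant u v f) (p : ℝ) :
    IsTranslationEquivariant (p • u) (p • v) f := fun x t => by
  rw [smul_smul, hf, smul_smul]

lemma iterate {F : E → E} {ρ : ℝ} (hF : IsTranslationEquivariant u (ρ • u) F) (k : ℕ) :
    IsTranslationEquivariant u (ρ ^ k • u) F^[k] := by
  induction k with
  | zero => simp [IsTranslationEquivariant]
  | succ k ih =>
    rw [Function.iterate_succ', pow_succ, mul_smul]
    exact (hF.smul (ρ ^ k)).comp ih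

lemma prodMk {f : E → E'} {g : E → E''} (hf : IsTranslationEquivariant u v f)
    (hg : IsTranslationEquivariant u w g) :
    IsTranslationEquivariant u (v, w) fun x => (f x, g x) := fun x t => by
  simp only [hf x t, hg x t, Prod.smul_mk, Prod.mk_add_mk]

lemma finset_inf' {ι : Type*} {s : Finset ι} (hs : s.Nonempty) {f : ι → E → ℝ} {p : ℝ}
    (hf : ∀ j ∈ s, IsTranslationEquivariant u p (f j)) :
    IsTranslationEquivariant u p fun x => s.inf' hs fun j => f j x := by
  have hinf (f₁ : E → ℝ) (h₁ : IsTranslationEquivariant u p f₁) (f₂ : E → ℝ)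
      (h₂ : IsTranslationEquivariant u p f₂) : IsTranslationEquivariant u p (f₁ ⊓ f₂) :=
    fun x t => by simp only [Pi.inf_apply, h₁ x t, h₂ x t, min_add_add_right]
  simpa only [← Finset.inf'_apply] using Finset.inf'_induction hs f hinf hf

lemma tateLimit {F : E → E} {h : E → ℝ} {ρ C p : ℝ} (hρ : 1 < ρ)
    (hC : ∀ x, |h (F x) - ρ * h x| ≤ C) (hF : IsTranslationEquivariant u (ρ • u) F)
    (hh : IsTranslationEquivariant u p h) :
    IsTranslationEquivariant u p (tateLimit F h ρ) := fun x t => by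
  refine tendsto_nhds_unique (tendsto_tateLimit hρ hC _)
    (((tendsto_tateLimit hρ hC x).add_const (t • p)).congr fun k => ?_)
  have hk : h (F^[k] (x + t • u)) = h (F^[k] x) + t • ρ ^ k • p :=
    ((hh.smul (ρ ^ k)).comp (hF.iterate k)) x t
  have hρk : ρ ^ k ≠ 0 := by positivity
  rw [hk, add_div, smul_comm, smul_eq_mul (ρ ^ k), mul_div_cancel_left₀ _ hρk]

end IsTranslationEquivariant

section Plane

lemma monotone_min_fst_snd : Monotone fun X : ℝ × ℝ => min X.1 X.2 :=
  monotone_fst.min monotone_snd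

lemma concaveOn_min_fst_snd : ConcaveOn ℝ Set.univ fun X : ℝ × ℝ => min X.1 X.2 :=
  ((LinearMap.fst ℝ ℝ ℝ).concaveOn convex_univ).inf ((LinearMap.snd ℝ ℝ ℝ).concaveOn convex_univ)

lemma isTranslationEquivariant_min_fst_snd :
    IsTranslationEquivariant (1, 1) 1 fun X : ℝ × ℝ => min X.1 X.2 := fun X t => by
  simp [min_add_add_right]

lemma isTranslationEquivariant_one_one_iff {G : ℝ × ℝ → ℝ} {p : ℝ} :
    IsTranslationEquivariant (1, 1) p G ↔
      ∀ (X : ℝ × ℝ) (t : ℝ), G (X.1 + t, X.2 + t) = G X + t * p := by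
  simp [IsTranslationEquivariant, Prod.add_def]

variable {G : ℝ × ℝ → ℝ}

lemma IsTranslationEquivariant.sub_min_eq_apply_zero_sub (hG : IsTranslationEquivariant (1, 1) 1 G)
    (X : ℝ × ℝ) : G X - min X.1 X.2 = G (0, X.2 - X.1) - min 0 (X.2 - X.1) := by
  have hGX := isTranslationEquivariant_one_one_iff.1 hG (0, X.2 - X.1) X.1
  have hmin := min_add_add_right 0 (X.2 - X.1) X.1
  simp only [zero_add, sub_add_cancel, mul_one] at hGX hmin
  rw [hGX, hmin, add_sub_add_right_eq_sub]

lemma IsTranslationEquivariant.comp_swap (hG : IsTranslationEquivariant (1, 1) 1 G) :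
    IsTranslationEquivariant (1, 1) 1 (G ∘ Prod.swap) := fun X t => hG X.swap t

lemma IsTranslationEquivariant.tendsto_sub_min_iff_tendsto_apply_zero
    (hG : IsTranslationEquivariant (1, 1) 1 G) {L : ℝ} :
    Tendsto (fun X : ℝ × ℝ => G X - min X.1 X.2) (comap (fun X => X.2 - X.1) atTop) (nhds L) ↔
      Tendsto (fun d => G (0, d)) atTop (nhds L) := by
  have hsurj : Set.range (fun X : ℝ × ℝ => X.2 - X.1) ∈ (atTop : Filter ℝ) :=
    univ_mem' fun d => ⟨(0, d), sub_zero d⟩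
  have hprofile : (fun d => G (0, d) - min 0 d) =ᶠ[atTop] fun d => G (0, d) := by
    filter_upwards [eventually_ge_atTop 0] with d hd
    rw [min_eq_left hd, sub_zero]
  rw [funext hG.sub_min_eq_apply_zero_sub, ← tendsto_congr' hprofile, ← tendsto_comap'_iff hsurj]
  rfl

lemma IsTranslationEquivariant.exists_tendsto_sub_min_iff_exists_abs_le
    (hG : IsTranslationEquivariant (1, 1) 1 G) (hmono : Monotone fun d => G (0, d)) :
    (∃ L, Tendsto (fun X : ℝ × ℝ => G X - min X.1 X.2) (comap (fun X => X.2 - X.1) atTop)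
      (nhds L)) ↔ ∃ K, ∀ X : ℝ × ℝ, X.1 ≤ X.2 → |G X - min X.1 X.2| ≤ K := by
  simp only [hG.tendsto_sub_min_iff_tendsto_apply_zero]
  constructor
  · rintro ⟨L, hL⟩
    refine ⟨max |G (0, 0)| |L|, fun X hX => ?_⟩
    rw [hG.sub_min_eq_apply_zero_sub, min_eq_left (sub_nonneg.2 hX), sub_zero]
    exact abs_le_max_abs_abs (hmono (sub_nonneg.2 hX)) (hmono.ge_of_tendsto hL _)
  · rintro ⟨K, hK⟩
    refine ⟨_, tendsto_atTop_ciSup hmono ⟨K, ?_⟩⟩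
    rintro _ ⟨d, rfl⟩
    have hd := hK (0, max d 0) (le_max_right d 0)
    simp only [min_eq_left (le_max_right d 0), sub_zero] at hd
    exact (hmono (le_max_left d 0)).trans ((le_abs_self _).trans hd)

lemma exists_tendsto_sub_min_swap_iff :
    (∃ L, Tendsto (fun X : ℝ × ℝ => (G ∘ Prod.swap) X - min X.1 X.2)
      (comap (fun X => X.2 - X.1) atTop) (nhds L)) ↔
    ∃ L, Tendsto (fun X : ℝ × ℝ => G X - min X.1 X.2) (comap (fun X => X.1 - X.2) atTop)
      (nhds L) := by
  have hsurj : Set.range (Prod.swap : ℝ × ℝ → ℝ × ℝ) ∈ comap (fun X => X.1 - X.2) atTop := by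
    rw [Prod.swap_surjective.range_eq]
    exact univ_mem
  refine exists_congr fun L => ?_
  rw [← tendsto_comap'_iff hsurj, comap_comap]
  simp only [Function.comp_def, Prod.fst_swap, Prod.snd_swap, min_comm]

lemma IsTranslationEquivariant.exists_tendsto_sub_min_and_iff_exists_abs_le
    (hG : IsTranslationEquivariant (1, 1) 1 G) (hmono : Monotone G) :
    ((∃ L, Tendsto (fun X : ℝ × ℝ => G X - min X.1 X.2) (comap (fun X => X.2 - X.1) atTop)
        (nhds L)) ∧
      ∃ L, Tendsto (fun X : ℝ × ℝ => G X - min X.1 X.2) (comap (fun X => X.1 - X.2) atTop)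
        (nhds L)) ↔
    ∃ K, ∀ X : ℝ × ℝ, |G X - min X.1 X.2| ≤ K := by
  obtain ⟨hsnd, hfst⟩ := monotone_prod_iff.1 hmono
  rw [← exists_tendsto_sub_min_swap_iff, hG.exists_tendsto_sub_min_iff_exists_abs_le (hsnd 0),
    hG.comp_swap.exists_tendsto_sub_min_iff_exists_abs_le (hfst 0)]
  constructor
  · rintro ⟨⟨K, hK⟩, K', hK'⟩
    refine ⟨max K K', fun X => ?_⟩
    rcases le_total X.1 X.2 with hX | hX
    · exact (hK X hX).trans (le_max_left K K')
    · rw [min_comm]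
      exact (hK' X.swap hX).trans (le_max_right K K')
  · rintro ⟨K, hK⟩
    exact ⟨⟨K, fun X _ => hK X⟩, K, fun X _ => min_comm X.1 X.2 ▸ hK X.swap⟩

end Plane

/-- The potential of a map `F` of the plane of degree `ρ`: conditions (i), (ii), (iii) of the
theorem, with limits towards the two ends of the plane transverse to the diagonal. -/
def IsPotential (ρ : ℝ) (F : ℝ × ℝ → ℝ × ℝ) (G : ℝ × ℝ → ℝ) : Prop :=
  (∀ (X : ℝ × ℝ) (t : ℝ), G (X.1 + t, X.2 + t) = G X + t) ∧
  ConcaveOn ℝ Set.univ G ∧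
  (∀ X₁ : ℝ, Monotone fun X₀ => G (X₀, X₁)) ∧
  (∀ X₀ : ℝ, Monotone fun X₁ => G (X₀, X₁)) ∧
  (∃ L : ℝ, Tendsto (fun X : ℝ × ℝ => G X - min X.1 X.2)
    (comap (fun X : ℝ × ℝ => X.2 - X.1) atTop) (nhds L)) ∧
  (∃ L : ℝ, Tendsto (fun X : ℝ × ℝ => G X - min X.1 X.2)
    (comap (fun X : ℝ × ℝ => X.1 - X.2) atTop) (nhds L)) ∧
  (∀ X : ℝ × ℝ, G (F X) = ρ * G X)

lemma isPotential_iff {ρ : ℝ} {F : ℝ × ℝ → ℝ × ℝ} {G : ℝ × ℝ → ℝ} :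
    IsPotential ρ F G ↔
      IsTranslationEquivariant (1, 1) 1 G ∧ ConcaveOn ℝ Set.univ G ∧ Monotone G ∧
      (∃ K, ∀ X : ℝ × ℝ, |G X - min X.1 X.2| ≤ K) ∧ ∀ X, G (F X) = ρ * G X := by
  have hhom : (∀ (X : ℝ × ℝ) (t : ℝ), G (X.1 + t, X.2 + t) = G X + t) ↔
      IsTranslationEquivariant (1, 1) 1 G := by
    simp only [isTranslationEquivariant_one_one_iff, mul_one]
  rw [IsPotential, hhom]
  constructor
  · rintro ⟨hG, hconc, hfst, hsnd, hright, hleft, hmap⟩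
    have hmono : Monotone G := monotone_prod_iff.2 ⟨hsnd, hfst⟩
    have hbdd := (hG.exists_tendsto_sub_min_and_iff_exists_abs_le hmono).1 ⟨hright, hleft⟩
    exact ⟨hG, hconc, hmono, hbdd, hmap⟩
  · rintro ⟨hG, hconc, hmono, hbdd, hmap⟩
    obtain ⟨hright, hleft⟩ := (hG.exists_tendsto_sub_min_and_iff_exists_abs_le hmono).2 hbdd
    obtain ⟨hsnd, hfst⟩ := monotone_prod_iff.1 hmono
    exact ⟨hG, hconc, hfst, hsnd, hright, hleft, hmap⟩

/-- Monotone concave self-maps of the plane, homogeneous of degree `ρ` in the min-plus sense, that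
multiply `min` by `ρ` up to a bounded error. The last condition is what the presence of both pure
terms `(n, 0)` and `(0, n)` means for a minimum of affine functions of degree `n`. -/
structure IsConcaveMapOfDegree (ρ : ℝ) (F : ℝ × ℝ → ℝ × ℝ) : Prop where
  equivariant : IsTranslationEquivariant (1, 1) (ρ • (1, 1)) F
  monotone : Monotone F
  concaveOn : ConcaveOn ℝ Set.univ F
  exists_abs_min_sub_le : ∃ C, ∀ X : ℝ × ℝ, |min (F X).1 (F X).2 - ρ * min X.1 X.2| ≤ C

theorem IsConcaveMapOfDegree.isPotential_tateLimit {ρ : ℝ} {F : ℝ × ℝ → ℝ × ℝ}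
    (hF : IsConcaveMapOfDegree ρ F) (hρ : 1 < ρ) :
    IsPotential ρ F (tateLimit F (fun X => min X.1 X.2) ρ) := by
  obtain ⟨C, hC⟩ := hF.exists_abs_min_sub_le
  exact isPotential_iff.2
    ⟨.tateLimit hρ hC hF.equivariant isTranslationEquivariant_min_fst_snd,
      concaveOn_tateLimit hρ hC hF.concaveOn hF.monotone concaveOn_min_fst_snd
        monotone_min_fst_snd,
      monotone_tateLimit hρ hC hF.monotone monotone_min_fst_snd,
      ⟨C / (ρ - 1), abs_tateLimit_sub_le hρ hC⟩, tateLimit_map hρ hC⟩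

theorem IsPotential.unique {ρ : ℝ} {F : ℝ × ℝ → ℝ × ℝ} {G H : ℝ × ℝ → ℝ} (hρ : 1 < ρ)
    (hG : IsPotential ρ F G) (hH : IsPotential ρ F H) : G = H := by
  obtain ⟨-, -, -, ⟨K, hK⟩, hGF⟩ := isPotential_iff.1 hG
  obtain ⟨-, -, -, ⟨K', hK'⟩, hHF⟩ := isPotential_iff.1 hH
  have hmap (X : ℝ × ℝ) : G (F X) - H (F X) = ρ * (G X - H X) := by rw [hGF, hHF, mul_sub]
  have hbdd (X : ℝ × ℝ) : |G X - H X| ≤ K + K' := by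
    rw [← sub_sub_sub_cancel_right (G X) (H X) (min X.1 X.2)]
    exact (abs_sub _ _).trans (add_le_add (hK X) (hK' X))
  exact funext fun X => sub_eq_zero.1 (eq_zero_of_map_eq_mul_of_abs_le hρ hmap hbdd X)

section MinAffine

variable {J : Type*}

/-- The minimum of finitely many affine functions `a j * X₀ + b j * X₁ + c j`: a min-plus
polynomial in two variables, with real weights. -/
def minAffine (s : Finset J) (hs : s.Nonempty) (a b c : J → ℝ) (X : ℝ × ℝ) : ℝ :=
  s.inf' hs fun j => a j * X.1 + b j * X.2 + c j

variable {s : Finset J} {a b c : J → ℝ} {ρ : ℝ}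

lemma monotone_minAffine (hs : s.Nonempty) (ha : ∀ j ∈ s, 0 ≤ a j) (hb : ∀ j ∈ s, 0 ≤ b j) :
    Monotone (minAffine s hs a b c) :=
  monotone_finset_inf' hs fun j hj =>
    ((monotone_fst.const_mul (ha j hj)).add (monotone_snd.const_mul (hb j hj))).add_const (c j)

lemma concaveOn_minAffine (hs : s.Nonempty) : ConcaveOn ℝ Set.univ (minAffine s hs a b c) :=
  concaveOn_finset_inf' hs fun j _ =>
    ((a j • LinearMap.fst ℝ ℝ ℝ + b j • LinearMap.snd ℝ ℝ ℝ).concaveOn convex_univ).add_const (c j)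

lemma isTranslationEquivariant_minAffine (hs : s.Nonempty) (hab : ∀ j ∈ s, a j + b j = ρ) :
    IsTranslationEquivariant (1, 1) ρ (minAffine s hs a b c) :=
  .finset_inf' hs fun j hj => isTranslationEquivariant_one_one_iff.2 fun X t => by
    rw [← hab j hj]
    ring

lemma mul_min_add_inf'_le_minAffine (hs : s.Nonempty) (ha : ∀ j ∈ s, 0 ≤ a j)
    (hb : ∀ j ∈ s, 0 ≤ b j) (hab : ∀ j ∈ s, a j + b j = ρ) (X : ℝ × ℝ) :
    ρ * min X.1 X.2 + s.inf' hs c ≤ minAffine s hs a b c X := by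
  refine Finset.le_inf' _ _ fun j hj => ?_
  calc ρ * min X.1 X.2 + s.inf' hs c
      ≤ ρ * min X.1 X.2 + c j := by gcongr; exact Finset.inf'_le c hj
    _ = a j * min X.1 X.2 + b j * min X.1 X.2 + c j := by rw [← hab j hj, add_mul]
    _ ≤ a j * X.1 + b j * X.2 + c j := by
      gcongr
      exacts [ha j hj, min_le_left _ _, hb j hj, min_le_right _ _]

lemma minAffine_le (hs : s.Nonempty) {j : J} (hj : j ∈ s) (X : ℝ × ℝ) :
    minAffine s hs a b c X ≤ a j * X.1 + b j * X.2 + c j :=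
  Finset.inf'_le (fun j => a j * X.1 + b j * X.2 + c j) hj

end MinAffine

section MinAffinePair

variable {J : Type*} {s : Fin 2 → Finset J} {a b c : Fin 2 → J → ℝ} {ρ : ℝ}

lemma exists_min_minAffine_le (hs : ∀ i, (s i).Nonempty)
    (hfst : ∃ i, ∃ j ∈ s i, a i j = ρ ∧ b i j = 0)
    (hsnd : ∃ i, ∃ j ∈ s i, a i j = 0 ∧ b i j = ρ) :
    ∃ U, ∀ X, min (minAffine (s 0) (hs 0) (a 0) (b 0) (c 0) X)
      (minAffine (s 1) (hs 1) (a 1) (b 1) (c 1) X) ≤ ρ * min X.1 X.2 + U := by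
  obtain ⟨i, j, hj, haj, hbj⟩ := hfst
  obtain ⟨i', j', hj', haj', hbj'⟩ := hsnd
  refine ⟨max (c i j) (c i' j'), fun X => ?_⟩
  have hmin : ∀ k, min (minAffine (s 0) (hs 0) (a 0) (b 0) (c 0) X)
      (minAffine (s 1) (hs 1) (a 1) (b 1) (c 1) X) ≤ minAffine (s k) (hs k) (a k) (b k) (c k) X :=
    Fin.forall_fin_two.2 ⟨min_le_left _ _, min_le_right _ _⟩
  have hX₀ := (hmin i).trans (minAffine_le (hs i) hj X)
  have hX₁ := (hmin i').trans (minAffine_le (hs i') hj' X)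
  rw [haj, hbj] at hX₀
  rw [haj', hbj'] at hX₁
  rcases min_choice X.1 X.2 with h | h <;> rw [h] <;>
    linarith [le_max_left (c i j) (c i' j'), le_max_right (c i j) (c i' j')]

theorem isConcaveMapOfDegree_minAffine (hs : ∀ i, (s i).Nonempty)
    (ha : ∀ i, ∀ j ∈ s i, 0 ≤ a i j) (hb : ∀ i, ∀ j ∈ s i, 0 ≤ b i j)
    (hab : ∀ i, ∀ j ∈ s i, a i j + b i j = ρ)
    (hfst : ∃ i, ∃ j ∈ s i, a i j = ρ ∧ b i j = 0)
    (hsnd : ∃ i, ∃ j ∈ s i, a i j = 0 ∧ b i j = ρ) :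
    IsConcaveMapOfDegree ρ fun X => (minAffine (s 0) (hs 0) (a 0) (b 0) (c 0) X,
      minAffine (s 1) (hs 1) (a 1) (b 1) (c 1) X) where
  equivariant := by
    simpa using (isTranslationEquivariant_minAffine (hs 0) (hab 0)).prodMk
      (isTranslationEquivariant_minAffine (hs 1) (hab 1))
  monotone := (monotone_minAffine (hs 0) (ha 0) (hb 0)).prodMk
    (monotone_minAffine (hs 1) (ha 1) (hb 1))
  concaveOn := concaveOn_prodMk (concaveOn_minAffine (hs 0)) (concaveOn_minAffine (hs 1))
  exists_abs_min_sub_le := by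
    obtain ⟨U, hU⟩ := exists_min_minAffine_le hs (c := c) hfst hsnd
    have hlower i X := mul_min_add_inf'_le_minAffine (c := c i) (hs i) (ha i) (hb i) (hab i) X
    refine ⟨max |min ((s 0).inf' (hs 0) (c 0)) ((s 1).inf' (hs 1) (c 1))| |U|,
      fun X => abs_le_max_abs_abs ?_ (sub_le_iff_le_add'.2 (hU X))⟩
    rw [le_sub_iff_add_le', ← min_add_add_left]
    exact min_le_min (hlower 0 X) (hlower 1 X)

end MinAffinePair

theorem stmt_9_general {ρ : ℝ} (hρ : 1 < ρ) {F : ℝ × ℝ → ℝ × ℝ}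
    (hF : IsConcaveMapOfDegree ρ F) : ∃! G : ℝ × ℝ → ℝ, IsPotential ρ F G :=
  ⟨_, hF.isPotential_tateLimit hρ, fun _ hG => hG.unique hρ (hF.isPotential_tateLimit hρ)⟩

/-- Existence and uniqueness of the potential for a degree-`n` PL map of the
line.  `F = (F₀, F₁)` has components which are minima of nonempty finite families of
affine functions `a·X₀ + b·X₁ + c` with natural coefficients satisfying `a + b = n`, and
among all terms there occurs at least one with `(a,b) = (n,0)` and one with
`(a,b) = (0,n)`.  Then there is a unique `G : ℝ² → ℝ` which: (i) is homogeneous of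
degree 1; (ii) is concave, nondecreasing in each variable, and
`G(X₀,X₁) − min(X₀,X₁)` has finite limits as `X₁−X₀ → +∞` and as `X₀−X₁ → +∞`;
(iii) satisfies `G(F(X)) = n·G(X)`. -/
theorem stmt_9 (n : ℕ) (hn : 2 ≤ n)
    (s : Fin 2 → Finset ℕ) (hs : ∀ i, (s i).Nonempty)
    (a b : Fin 2 → ℕ → ℕ) (cc : Fin 2 → ℕ → ℝ)
    (hab : ∀ i, ∀ j ∈ s i, a i j + b i j = n)
    (hnorm1 : ∃ i, ∃ j ∈ s i, a i j = n ∧ b i j = 0)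
    (hnorm2 : ∃ i, ∃ j ∈ s i, a i j = 0 ∧ b i j = n) :
    let Fc : Fin 2 → ℝ × ℝ → ℝ := fun i X =>
      (s i).inf' (hs i) fun j => (a i j : ℝ) * X.1 + (b i j : ℝ) * X.2 + cc i j
    let F : ℝ × ℝ → ℝ × ℝ := fun X => (Fc 0 X, Fc 1 X)
    ∃! G : ℝ × ℝ → ℝ,
      (∀ (X : ℝ × ℝ) (t : ℝ), G (X.1 + t, X.2 + t) = G X + t) ∧
      ConcaveOn ℝ Set.univ G ∧
      (∀ X₁ : ℝ, Monotone fun X₀ => G (X₀, X₁)) ∧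
      (∀ X₀ : ℝ, Monotone fun X₁ => G (X₀, X₁)) ∧
      (∃ L : ℝ, Tendsto (fun X : ℝ × ℝ => G X - min X.1 X.2)
        (comap (fun X : ℝ × ℝ => X.2 - X.1) atTop) (nhds L)) ∧
      (∃ L : ℝ, Tendsto (fun X : ℝ × ℝ => G X - min X.1 X.2)
        (comap (fun X : ℝ × ℝ => X.1 - X.2) atTop) (nhds L)) ∧
      (∀ X : ℝ × ℝ, G (F X) = n * G X) :=
  stmt_9_general (by exact_mod_cast hn) <| isConcaveMapOfDegree_minAffine hs
    (fun _ _ _ => Nat.cast_nonneg _) (fun _ _ _ => Nat.cast_nonneg _)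
    (fun i j hj => by exact_mod_cast hab i j hj) (by exact_mod_cast hnorm1)
    (by exact_mod_cast hnorm2)
end

section
/- Let ε > 0 and l, r ∈ ℝ with |l|·ε ≤ 1 and |r|·ε ≤ 1, and let f : (−ε,ε) → (−1,1) be the piecewise linear map f(x) = l·x for x ≤ 0 and f(x) = r·x for x ≥ 0. Let g be concave on (−1,1). Then the distribution μ_{g∘f} on (−ε,ε) is a measure, equal to |l| times the pushforward under the inverse of f|_{(−ε,0)} of μ_g restricted to f((−ε,0)), plus |r| times the pushforward under the inverse of f|_{(0,ε)} of μ_g restricted to f((0,ε)), plus c_{f,g}·δ₀, where δ₀ is the Dirac mass at 0 and c_{f,g} = l·g'_l(0) − r·g'_r(0) if l ≥ 0 and r ≥ 0; c_{f,g} = (l − r)·g'_l(0) if l ≥ 0 ≥ r; c_{f,g} = (l − r)·g'_r(0) if l ≤ 0 ≤ r; c_{f,g} = l·g'_r(0) − r·g'_l(0) if l ≤ 0 and r ≤ 0. -/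
open MeasureTheory Set

/-!
The heart of the matter is a one-sided Green formula: if `-h'' = ν` as distributions and `h` has
right derivative `d` at `0`, then `-∫_{x > 0} h φ'' = ∫_{x > 0} φ dν + h(0) φ'(0) - d φ(0)`.
Subtracting `h(0) + d x` reduces it to `h(x) = o(x)` at `0⁺`, where one tests against
`φ(x) χ(N x)` for a smooth step `χ` and lets `N → ∞`. Reflection gives the formula on `x < 0`.
Applying the two formulas to `x ↦ g (r x)` and `x ↦ g (l x)`, whose second derivatives are
rescalings of `μ`, and adding, the terms `g(0) φ'(0)` cancel and the one-sided derivatives make up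
the coefficient of the Dirac mass.

Since `μ` is not assumed locally finite, a test function may fail to be integrable. Its integral
is then `0` by convention, and this forces `-h''` to be the zero distribution, so that the
Green formula for the measure `0` applies.
-/

open Filter Topology
open scoped Pointwise

/-! ### One-variable calculus -/

lemma deriv_deriv_comp_mul_left (s : ℝ) (φ : ℝ → ℝ) (x : ℝ) :
    deriv (deriv fun x => φ (s * x)) x = s ^ 2 * deriv (deriv φ) (s * x) := by
  have hderiv : (deriv fun x => φ (s * x)) = fun x => s * deriv φ (s * x) :=
    funext fun x => deriv_comp_mul_left s φ x
  rw [hderiv, deriv_const_mul_field, deriv_comp_mul_left, smul_eq_mul]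
  ring

lemma deriv_deriv_mul {φ ψ : ℝ → ℝ} (hφ : ContDiff ℝ 2 φ) (hψ : ContDiff ℝ 2 ψ) (x : ℝ) :
    deriv (deriv fun x => φ x * ψ x) x
      = deriv (deriv φ) x * ψ x + 2 * (deriv φ x * deriv ψ x) + φ x * deriv (deriv ψ) x := by
  have hφ₀ := hφ.differentiable two_ne_zero
  have hψ₀ := hψ.differentiable two_ne_zero
  have hφ₁ := hφ.differentiable_deriv_two
  have hψ₁ := hψ.differentiable_deriv_two
  have hderiv : (deriv fun x => φ x * ψ x) = fun x => deriv φ x * ψ x + φ x * deriv ψ x :=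
    funext fun x => deriv_fun_mul (hφ₀ x) (hψ₀ x)
  rw [hderiv, deriv_fun_add ((hφ₁ x).fun_mul (hψ₀ x)) ((hφ₀ x).fun_mul (hψ₁ x)),
    deriv_fun_mul (hφ₁ x) (hψ₀ x), deriv_fun_mul (hφ₀ x) (hψ₁ x)]
  ring

lemma hasDerivWithinAt_comp_mul_left_zero {g : ℝ → ℝ} {s d : ℝ} {S T : Set ℝ}
    (hg : HasDerivWithinAt g d T 0) (hST : MapsTo (s * ·) S T) :
    HasDerivWithinAt (fun x => g (s * x)) (s * d) S 0 := by
  have hg' : HasDerivWithinAt g d (s • S) (s * 0) := by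
    rw [mul_zero]
    exact hg.mono hST.image_subset
  exact hasDerivWithinAt_comp_mul_left_smul_iff.2 hg'

lemma hasDerivWithinAt_Ici_comp_mul_left {g : ℝ → ℝ} {gl gr : ℝ}
    (hgl : HasDerivWithinAt g gl (Iic 0) 0) (hgr : HasDerivWithinAt g gr (Ici 0) 0) (s : ℝ) :
    HasDerivWithinAt (fun x => g (s * x)) (s * if 0 ≤ s then gr else gl) (Ici 0) 0 := by
  split_ifs with hs
  · exact hasDerivWithinAt_comp_mul_left_zero hgr fun x hx => mul_nonneg hs hx
  · exact hasDerivWithinAt_comp_mul_left_zero hgl fun x hx =>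
      mul_nonpos_of_nonpos_of_nonneg (le_of_not_ge hs) hx

lemma hasDerivWithinAt_Iic_comp_mul_left {g : ℝ → ℝ} {gl gr : ℝ}
    (hgl : HasDerivWithinAt g gl (Iic 0) 0) (hgr : HasDerivWithinAt g gr (Ici 0) 0) (s : ℝ) :
    HasDerivWithinAt (fun x => g (s * x)) (s * if 0 ≤ s then gl else gr) (Iic 0) 0 := by
  split_ifs with hs
  · exact hasDerivWithinAt_comp_mul_left_zero hgl fun x hx => mul_nonpos_of_nonneg_of_nonpos hs hx
  · exact hasDerivWithinAt_comp_mul_left_zero hgr fun x hx =>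
      mul_nonneg_of_nonpos_of_nonpos (le_of_not_ge hs) hx

lemma mul_mem_Ioo_of_abs_mul_le_one {s ε x : ℝ} (hs : |s| * ε ≤ 1) (hx : x ∈ Ioo (-ε) ε) :
    s * x ∈ Ioo (-1) 1 := by
  rw [mem_Ioo, ← abs_lt, abs_mul]
  rcases (abs_nonneg s).eq_or_lt with hs₀ | hs₀
  · simp [← hs₀]
  · exact (mul_lt_mul_of_pos_left (abs_lt.2 hx) hs₀).trans_le hs

lemma setIntegral_ofReal_smul_map_div {φ : ℝ → ℝ} (hφ : Continuous φ) (s : ℝ) (μ : Measure ℝ)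
    {S : Set ℝ} (hS : MeasurableSet S) :
    ∫ x in S, φ x ∂(ENNReal.ofReal |s| • μ.map (· / s))
      = |s| * ∫ y in (s * ·) '' S, φ (y / s) ∂μ := by
  rw [Measure.restrict_smul, integral_smul_measure, ENNReal.toReal_ofReal (abs_nonneg s),
    smul_eq_mul]
  rcases eq_or_ne s 0 with rfl | hs
  · simp
  · rw [setIntegral_map hS hφ.aestronglyMeasurable (by fun_prop)]
    have himage : (s * ·) '' S = (· / s) ⁻¹' S :=
      congrFun (image_eq_preimage_of_inverse (fun x => mul_div_cancel_left₀ x hs)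
        fun y => mul_div_cancel₀ y hs) S
    rw [himage]

/-! ### Smooth cutoffs concentrating at the origin -/

lemma tendsto_integral_mul_smoothTransition {ν : Measure ℝ} {u : ℝ → ℝ}
    (hu : IntegrableOn u (Ioi 0) ν) :
    Tendsto (fun N : ℝ => ∫ x, u x * Real.smoothTransition (N * x) ∂ν) atTop
      (𝓝 (∫ x in Ioi 0, u x ∂ν)) := by
  have hlim : Tendsto (fun N : ℝ => ∫ x in Ioi 0, u x * Real.smoothTransition (N * x) ∂ν) atTop
      (𝓝 (∫ x in Ioi 0, u x ∂ν)) := by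
    refine tendsto_integral_filter_of_dominated_convergence (fun x => ‖u x‖) ?_ ?_ hu.norm ?_
    · exact .of_forall fun N => hu.aestronglyMeasurable.mul
        (Real.smoothTransition.continuous.comp (continuous_const_mul N)).aestronglyMeasurable
    · refine .of_forall fun N => .of_forall fun x => ?_
      rw [norm_mul, Real.norm_of_nonneg (Real.smoothTransition.nonneg _)]
      exact mul_le_of_le_one_right (norm_nonneg _) (Real.smoothTransition.le_one _)
    · filter_upwards [ae_restrict_mem measurableSet_Ioi] with x hx
      refine tendsto_const_nhds.congr' ?_
      filter_upwards [(tendsto_id.atTop_mul_const hx).eventually_ge_atTop 1] with N (hN : 1 ≤ N * x)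
      rw [Real.smoothTransition.one_of_one_le hN, mul_one]
  refine hlim.congr' ?_
  filter_upwards [eventually_ge_atTop 0] with N hN
  refine setIntegral_eq_integral_of_forall_compl_eq_zero fun x hx => ?_
  rw [Real.smoothTransition.zero_of_nonpos (mul_nonpos_of_nonneg_of_nonpos hN (not_lt.1 hx)),
    mul_zero]

lemma tsupport_deriv_smoothTransition_subset :
    tsupport (deriv Real.smoothTransition) ⊆ Icc 0 1 := by
  refine closure_minimal (fun x hx => ?_) isClosed_Icc
  by_contra hx'
  rcases not_and_or.1 hx' with hx₀ | hx₁
  · have hzero : EqOn Real.smoothTransition (fun _ => 0) (Iio 0) := fun y hy =>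
      Real.smoothTransition.zero_of_nonpos (le_of_lt hy)
    exact hx ((hzero.deriv isOpen_Iio (not_le.1 hx₀)).trans (deriv_const _ _))
  · have hone : EqOn Real.smoothTransition (fun _ => 1) (Ioi 1) := fun y hy =>
      Real.smoothTransition.one_of_one_le (le_of_lt hy)
    exact hx ((hone.deriv isOpen_Ioi (not_le.1 hx₁)).trans (deriv_const _ _))

lemma mul_integral_mul_comp_mul_left {N : ℝ} (hN : 0 < N) (u k : ℝ → ℝ) :
    N * ∫ x, u x * k (N * x) = ∫ t, u (N⁻¹ * t) * k t := by
  have hscale := Measure.integral_comp_mul_left (fun t => u (N⁻¹ * t) * k t) N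
  simp only [inv_mul_cancel_left₀ hN.ne', abs_inv, abs_of_pos hN, smul_eq_mul] at hscale
  rw [hscale, mul_inv_cancel_left₀ hN.ne']

lemma tendsto_mul_integral_mul_comp_mul_left {u k : ℝ → ℝ} {R : ℝ}
    (hu : Tendsto u (𝓝[≥] 0) (𝓝 0)) (hk : Integrable k) (hkR : Function.support k ⊆ Icc 0 R) :
    Tendsto (fun N : ℝ => N * ∫ x, u x * k (N * x)) atTop (𝓝 0) := by
  rw [Metric.tendsto_nhds]
  intro η hη
  set C := ∫ t, ‖k t‖ with hC
  have hC₁ : 0 < C + 1 := by linarith [show 0 ≤ C from integral_nonneg fun t => norm_nonneg _]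
  obtain ⟨ρ, hρ, hsmall⟩ : ∃ ρ > 0, ∀ x ∈ Ico 0 ρ, ‖u x‖ < η / (C + 1) := by
    have hball := hu (Metric.ball_mem_nhds 0 (div_pos hη hC₁))
    obtain ⟨ρ, hρ, hsub⟩ := mem_nhdsGE_iff_exists_Ico_subset.1 hball
    exact ⟨ρ, hρ, fun x hx => mem_ball_zero_iff.1 (hsub hx)⟩
  filter_upwards [eventually_gt_atTop 0, eventually_gt_atTop (R / ρ)] with N hN hNR
  have hbound (t : ℝ) : ‖u (N⁻¹ * t) * k t‖ ≤ η / (C + 1) * ‖k t‖ := by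
    by_cases ht : k t = 0
    · simp [ht]
    · obtain ⟨ht₀, htR⟩ := hkR ht
      have htρ : N⁻¹ * t < ρ := by
        rw [inv_mul_lt_iff₀ hN]
        exact htR.trans_lt ((div_lt_iff₀ hρ).1 hNR)
      rw [norm_mul]
      gcongr
      exact (hsmall _ ⟨by positivity, htρ⟩).le
  rw [dist_zero_right, mul_integral_mul_comp_mul_left hN]
  calc ‖∫ t, u (N⁻¹ * t) * k t‖
      ≤ ∫ t, η / (C + 1) * ‖k t‖ :=
        norm_integral_le_of_norm_le (hk.norm.const_mul _) (.of_forall hbound)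
    _ = η * (C / (C + 1)) := by rw [integral_const_mul, ← hC]; ring
    _ < η := mul_lt_of_lt_one_right hη ((div_lt_one hC₁).2 (lt_add_one C))

lemma tendsto_mul_integral_mul_deriv_smoothTransition {u : ℝ → ℝ}
    (hu : Tendsto u (𝓝[≥] 0) (𝓝 0)) :
    Tendsto (fun N : ℝ => N * ∫ x, u x * deriv Real.smoothTransition (N * x)) atTop (𝓝 0) := by
  have hcont : Continuous (deriv Real.smoothTransition) :=
    Real.smoothTransition.contDiff.continuous_deriv le_rfl
  have hcompact : HasCompactSupport (deriv Real.smoothTransition) :=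
    isCompact_Icc.of_isClosed_subset (isClosed_tsupport _) tsupport_deriv_smoothTransition_subset
  exact tendsto_mul_integral_mul_comp_mul_left hu (hcont.integrable_of_hasCompactSupport hcompact)
    ((subset_tsupport _).trans tsupport_deriv_smoothTransition_subset)

lemma tendsto_mul_integral_mul_deriv_deriv_smoothTransition {u : ℝ → ℝ}
    (hu : Tendsto u (𝓝[≥] 0) (𝓝 0)) :
    Tendsto (fun N : ℝ => N * ∫ x, u x * (N * x * deriv (deriv Real.smoothTransition) (N * x)))
      atTop (𝓝 0) := by
  have hcont : Continuous fun t => t * deriv (deriv Real.smoothTransition) t := by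
    have hχ : ContDiff ℝ 2 Real.smoothTransition := Real.smoothTransition.contDiff
    exact continuous_id.mul ((hχ.deriv' (n := 1)).continuous_deriv le_rfl)
  have hsupp : Function.support (fun t => t * deriv (deriv Real.smoothTransition) t) ⊆ Icc 0 1 :=
    (Function.support_mul_subset_right _ _).trans
      (support_deriv_subset.trans tsupport_deriv_smoothTransition_subset)
  have hcompact : HasCompactSupport fun t => t * deriv (deriv Real.smoothTransition) t :=
    .of_support_subset_isCompact isCompact_Icc hsupp
  exact tendsto_mul_integral_mul_comp_mul_left hu (hcont.integrable_of_hasCompactSupport hcompact)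
    hsupp

/-! ### Test functions -/

/-- `φ` is a test function on `U`: smooth on `ℝ`, with compact support contained in `U`. This is
the unbundled form of `TestFunction`, for which the derivatives of `φ` can be written as `deriv`. -/
structure IsTestFunction (U : Set ℝ) (φ : ℝ → ℝ) : Prop where
  contDiff : ContDiff ℝ (⊤ : ℕ∞) φ
  hasCompactSupport : HasCompactSupport φ
  tsupport_subset : tsupport φ ⊆ U

namespace IsTestFunction

variable {U V : Set ℝ} {φ ψ : ℝ → ℝ}

protected lemma deriv (hφ : IsTestFunction U φ) : IsTestFunction U (deriv φ) :=
  ⟨(contDiff_infty_iff_deriv.1 hφ.contDiff).2, hφ.hasCompactSupport.deriv,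
    tsupport_deriv_subset.trans hφ.tsupport_subset⟩

lemma contDiff_two (hφ : IsTestFunction U φ) : ContDiff ℝ 2 φ :=
  hφ.contDiff.of_le (WithTop.coe_le_coe.2 le_top)

lemma differentiable (hφ : IsTestFunction U φ) : Differentiable ℝ φ :=
  hφ.contDiff.differentiable (by simp)

lemma add (hφ : IsTestFunction U φ) (hψ : IsTestFunction U ψ) :
    IsTestFunction U (fun x => φ x + ψ x) :=
  ⟨hφ.contDiff.add hψ.contDiff, hφ.hasCompactSupport.add hψ.hasCompactSupport,
    (tsupport_add φ ψ).trans (union_subset hφ.tsupport_subset hψ.tsupport_subset)⟩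

lemma mul_contDiff (hφ : IsTestFunction U φ) (hψ : ContDiff ℝ (⊤ : ℕ∞) ψ) :
    IsTestFunction U (fun x => φ x * ψ x) :=
  ⟨hφ.contDiff.mul hψ, hφ.hasCompactSupport.mul_right,
    tsupport_mul_subset_left.trans hφ.tsupport_subset⟩

lemma comp_mul_left (hφ : IsTestFunction V φ) {s : ℝ} (hs : s ≠ 0) (hVU : (s * ·) ⁻¹' V ⊆ U) :
    IsTestFunction U (fun x => φ (s * x)) where
  contDiff := hφ.contDiff.comp (by fun_prop)
  hasCompactSupport := hφ.hasCompactSupport.comp_homeomorph (Homeomorph.mulLeft₀ s hs)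
  tsupport_subset := by
    change tsupport (φ ∘ Homeomorph.mulLeft₀ s hs) ⊆ U
    rw [tsupport_comp_eq_preimage]
    exact (preimage_mono hφ.tsupport_subset).trans hVU

lemma eq_zero_of_notMem (hφ : IsTestFunction U φ) {x : ℝ} (hx : x ∉ U) : φ x = 0 :=
  image_eq_zero_of_notMem_tsupport fun h => hx (hφ.tsupport_subset h)

lemma setIntegral_mul (hφ : IsTestFunction U φ) (h : ℝ → ℝ) :
    ∫ x in U, h x * φ x = ∫ x, h x * φ x :=
  setIntegral_eq_integral_of_forall_compl_eq_zero fun x hx => by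
    rw [hφ.eq_zero_of_notMem hx, mul_zero]

lemma setIntegral_inter (hφ : IsTestFunction U φ) {S : Set ℝ} (hS : MeasurableSet S)
    (ν : Measure ℝ) : ∫ x in U ∩ S, φ x ∂ν = ∫ x in S, φ x ∂ν :=
  (setIntegral_eq_of_subset_of_forall_sdiff_eq_zero hS inter_subset_right fun _ hx =>
    hφ.eq_zero_of_notMem fun hxU => hx.2 ⟨hxU, hx.1⟩).symm

lemma integrable_mul (hφ : IsTestFunction U φ) {h : ℝ → ℝ} (hh : LocallyIntegrableOn h U) :
    Integrable (fun x => h x * φ x) := by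
  have hcompact : IsCompact (tsupport φ) := hφ.hasCompactSupport
  refine (integrableOn_iff_integrable_of_support_subset ?_).1
    ((hh.integrableOn_compact_subset hφ.tsupport_subset hcompact).mul_continuousOn
      hφ.contDiff.continuous.continuousOn hcompact)
  exact (Function.support_mul_subset_right h φ).trans (subset_tsupport φ)

lemma integrable (hφ : IsTestFunction U φ) : Integrable φ :=
  hφ.contDiff.continuous.integrable_of_hasCompactSupport hφ.hasCompactSupport

lemma exists_primitive_affine_mul_deriv_deriv (hφ : IsTestFunction U φ) (p d : ℝ) :
    ∃ F, IsTestFunction U F ∧ (∀ x, F x = (p + d * x) * deriv φ x - d * φ x) ∧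
      ∀ x, deriv F x = (p + d * x) * deriv (deriv φ) x := by
  refine ⟨fun x => deriv φ x * (p + d * x) + φ x * -d,
    (hφ.deriv.mul_contDiff (by fun_prop)).add (hφ.mul_contDiff contDiff_const),
    fun x => by ring, fun x => ?_⟩
  have haffine : HasDerivAt (fun x => p + d * x) d x := by
    simpa using ((hasDerivAt_id x).const_mul d).const_add p
  have hF := ((hφ.deriv.differentiable x).hasDerivAt.mul haffine).add
    ((hφ.differentiable x).hasDerivAt.mul_const (-d))
  exact hF.deriv.trans (by ring)

lemma integral_affine_mul_deriv_deriv (hφ : IsTestFunction U φ) (p d : ℝ) :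
    ∫ x, (p + d * x) * deriv (deriv φ) x = 0 := by
  obtain ⟨F, hF, -, hF_deriv⟩ := hφ.exists_primitive_affine_mul_deriv_deriv p d
  simp only [← hF_deriv]
  exact integral_eq_zero_of_hasDerivAt_of_integrable (fun x => (hF.differentiable x).hasDerivAt)
    hF.deriv.integrable hF.integrable

lemma integral_Ioi_affine_mul_deriv_deriv (hφ : IsTestFunction U φ) (p d a : ℝ) :
    ∫ x in Ioi a, (p + d * x) * deriv (deriv φ) x
      = d * φ a - (p + d * a) * deriv φ a := by
  obtain ⟨F, hF, hF_eq, hF_deriv⟩ := hφ.exists_primitive_affine_mul_deriv_deriv p d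
  simp only [← hF_deriv]
  rw [hF.hasCompactSupport.integral_Ioi_deriv_eq (hF.contDiff.of_le (WithTop.coe_le_coe.2 le_top)),
    hF_eq, neg_sub]

end IsTestFunction

/-! ### Second derivatives as measures -/

/-- The measure `ν` is the distribution `-h''` on `U`. The first field replaces local integrability
of `h`. Local finiteness of `ν` is not required, and the Bochner integral of a test function which
is not `ν`-integrable is `0`. -/
structure HasNegSecondDerivOn (h : ℝ → ℝ) (ν : Measure ℝ) (U : Set ℝ) : Prop where
  integrable_mul {φ : ℝ → ℝ} : IsTestFunction U φ → Integrable fun x => h x * φ x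
  integral_eq {φ : ℝ → ℝ} : IsTestFunction U φ → ∫ x, φ x ∂ν = -∫ x, h x * deriv (deriv φ) x

namespace HasNegSecondDerivOn

variable {h : ℝ → ℝ} {ν : Measure ℝ} {U V : Set ℝ} {φ : ℝ → ℝ}

lemma of_locallyIntegrableOn (hh : LocallyIntegrableOn h U)
    (hν : ∀ φ, IsTestFunction U φ → ∫ x, φ x ∂ν = -∫ x in U, h x * deriv (deriv φ) x) :
    HasNegSecondDerivOn h ν U :=
  ⟨fun hφ => hφ.integrable_mul hh, fun hφ => by rw [hν _ hφ, hφ.deriv.deriv.setIntegral_mul]⟩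

lemma sub_affine (hν : HasNegSecondDerivOn h ν U) (p d : ℝ) :
    HasNegSecondDerivOn (fun x => h x - (p + d * x)) ν U := by
  have hcont : Continuous fun x => p + d * x := by fun_prop
  have haffine {φ : ℝ → ℝ} (hφ : IsTestFunction U φ) : Integrable fun x => (p + d * x) * φ x :=
    hφ.integrable_mul (hcont.locallyIntegrable.locallyIntegrableOn U)
  refine ⟨fun hφ => ?_, fun hφ => ?_⟩
  · simp only [sub_mul]
    exact (hν.integrable_mul hφ).sub (haffine hφ)
  · simp only [sub_mul]
    rw [integral_sub (hν.integrable_mul hφ.deriv.deriv) (haffine hφ.deriv.deriv),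
      hφ.integral_affine_mul_deriv_deriv, sub_zero, hν.integral_eq hφ]

lemma comp_mul_left (hν : HasNegSecondDerivOn h ν U) {s : ℝ} (hs : MapsTo (s * ·) V U) :
    HasNegSecondDerivOn (fun x => h (s * x)) (ENNReal.ofReal |s| • ν.map (· / s)) V := by
  rcases eq_or_ne s 0 with rfl | hs₀
  · refine ⟨fun hφ => by simpa using hφ.integrable.const_mul (h 0), fun hφ => ?_⟩
    simpa using hφ.integral_affine_mul_deriv_deriv (h 0) 0
  have hpreimage : (s⁻¹ * ·) ⁻¹' V ⊆ U := fun y hy => by simpa [hs₀] using hs hy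
  have htest {φ : ℝ → ℝ} (hφ : IsTestFunction V φ) : IsTestFunction U fun y => φ (s⁻¹ * y) :=
    hφ.comp_mul_left (inv_ne_zero hs₀) hpreimage
  refine ⟨fun hφ => ?_, fun {φ} hφ => ?_⟩
  · simpa [hs₀] using (hν.integrable_mul (htest hφ)).comp_mul_left' hs₀
  · have hscale := Measure.integral_comp_mul_left (fun y => h y * deriv (deriv φ) (s⁻¹ * y)) s
    simp only [inv_mul_cancel_left₀ hs₀, smul_eq_mul, abs_inv] at hscale
    have hmap := setIntegral_ofReal_smul_map_div hφ.contDiff.continuous s ν MeasurableSet.univ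
    have hrange : (s * ·) '' univ = univ := by
      rw [image_univ]
      exact (mul_left_surjective₀ hs₀).range_eq
    rw [hrange, setIntegral_univ, setIntegral_univ] at hmap
    simp only [div_eq_inv_mul] at hmap ⊢
    rw [hmap, hν.integral_eq (htest hφ), hscale]
    simp only [deriv_deriv_comp_mul_left, mul_left_comm _ (s⁻¹ ^ 2), integral_const_mul]
    have hs' : |s| ≠ 0 := abs_ne_zero.2 hs₀
    rw [← sq_abs s⁻¹, abs_inv]
    field_simp

/-- For integrable `ψ` neither `φ` nor `φ + ψ` is integrable, so both have integral `0` and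
`-h''` vanishes on both, hence on `ψ`. -/
lemma zero_of_not_integrable (hν : HasNegSecondDerivOn h ν U) (hφ : IsTestFunction U φ)
    (hφν : ¬Integrable φ ν) : HasNegSecondDerivOn h 0 U := by
  refine ⟨hν.integrable_mul, fun {ψ} hψ => ?_⟩
  rw [integral_zero_measure, ← hν.integral_eq hψ]
  by_cases hψν : Integrable ψ ν
  · have hsum_not_integrable : ¬Integrable (fun x => φ x + ψ x) ν :=
      mt (integrable_add_iff_integrable_left hψν).1 hφν
    have hφ_zero := hν.integral_eq hφ
    have hsum_zero := hν.integral_eq (hφ.add hψ)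
    rw [integral_undef hφν] at hφ_zero
    have hderiv : deriv (deriv fun x => φ x + ψ x)
        = fun x => deriv (deriv φ) x + deriv (deriv ψ) x := by
      have hderiv₁ : (deriv fun x => φ x + ψ x) = fun x => deriv φ x + deriv ψ x :=
        funext fun x => deriv_fun_add (hφ.differentiable x) (hψ.differentiable x)
      rw [hderiv₁]
      exact funext fun x => deriv_fun_add (hφ.deriv.differentiable x) (hψ.deriv.differentiable x)
    simp only [integral_undef hsum_not_integrable, hderiv, mul_add] at hsum_zero
    rw [integral_add (hν.integrable_mul hφ.deriv.deriv) (hν.integrable_mul hψ.deriv.deriv)]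
      at hsum_zero
    rw [hν.integral_eq hψ]
    linarith
  · rw [integral_undef hψν]

/-! ### Green's formula on a half-line -/

lemma integral_mul_smoothTransition (hν : HasNegSecondDerivOn h ν U) (hh₀ : h 0 = 0)
    (hφ : IsTestFunction U φ) (N : ℝ) :
    ∫ x, φ x * Real.smoothTransition (N * x) ∂ν
      = -(∫ x, h x * deriv (deriv φ) x * Real.smoothTransition (N * x))
        - 2 * (N * ∫ x, h x * deriv φ x * deriv Real.smoothTransition (N * x))
        - N * ∫ x, h x / x * φ x * (N * x * deriv (deriv Real.smoothTransition) (N * x)) := by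
  set χ := Real.smoothTransition
  have hχ : ContDiff ℝ (⊤ : ℕ∞) χ := Real.smoothTransition.contDiff
  have hχ' : ContDiff ℝ (⊤ : ℕ∞) (deriv χ) := (contDiff_infty_iff_deriv.1 hχ).2
  have hχ'' : ContDiff ℝ (⊤ : ℕ∞) (deriv (deriv χ)) := (contDiff_infty_iff_deriv.1 hχ').2
  have hscale : ContDiff ℝ (⊤ : ℕ∞) fun x => N * x := by fun_prop
  have hχN : ContDiff ℝ (⊤ : ℕ∞) fun x => χ (N * x) := hχ.comp hscale
  have hint₀ := hν.integrable_mul (hφ.deriv.deriv.mul_contDiff hχN)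
  have hint₁ := hν.integrable_mul (hφ.deriv.mul_contDiff (hχ'.comp hscale))
  have hint₂ := hν.integrable_mul (hφ.mul_contDiff (hχ''.comp hscale))
  simp only [Function.comp_apply] at hint₁ hint₂
  have hexpand (x : ℝ) : h x * deriv (deriv fun x => φ x * χ (N * x)) x
      = h x * (deriv (deriv φ) x * χ (N * x)) + 2 * N * (h x * (deriv φ x * deriv χ (N * x)))
        + N ^ 2 * (h x * (φ x * deriv (deriv χ) (N * x))) := by
    rw [deriv_deriv_mul hφ.contDiff_two (hχN.of_le (WithTop.coe_le_coe.2 le_top)),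
      deriv_comp_mul_left, deriv_deriv_comp_mul_left, smul_eq_mul]
    ring
  have hdiv (x : ℝ) : h x / x * φ x * (N * x * deriv (deriv χ) (N * x))
      = N * (h x * (φ x * deriv (deriv χ) (N * x))) := by
    rcases eq_or_ne x 0 with rfl | hx
    · simp [hh₀]
    · field_simp
  rw [hν.integral_eq (hφ.mul_contDiff hχN)]
  simp only [hexpand, hdiv, mul_assoc (h _)]
  rw [integral_add (hint₀.fun_add (hint₁.const_mul _)) (hint₂.const_mul _),
    integral_add hint₀ (hint₁.const_mul _)]
  simp only [integral_const_mul]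
  ring

/-- Test against `φ(x) χ(N x)` with a smooth step `χ` and let `N → ∞`. The terms in which `χ` is
differentiated live on `0 ≤ x ≤ 1 / N`, where `h(x) = o(x)`. -/
lemma integral_Ioi_of_hasDerivWithinAt_zero (hν : HasNegSecondDerivOn h ν U) (hh₀ : h 0 = 0)
    (hh : HasDerivWithinAt h 0 (Ici 0) 0) (hφ : IsTestFunction U φ)
    (hφν : IntegrableOn φ (Ioi 0) ν) :
    ∫ x in Ioi 0, φ x ∂ν = -∫ x in Ioi 0, h x * deriv (deriv φ) x := by
  have hquot : Tendsto (fun x => h x / x) (𝓝[≥] 0) (𝓝 0) := by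
    have ho := hasDerivWithinAt_iff_isLittleO.1 hh
    simp only [hh₀, sub_zero, smul_zero] at ho
    exact ho.tendsto_div_nhds_zero
  have hh_zero : Tendsto h (𝓝[≥] 0) (𝓝 0) := by
    simpa only [ContinuousWithinAt, hh₀] using hh.continuousWithinAt
  have hvanish {v w : ℝ → ℝ} (hv : Tendsto v (𝓝[≥] 0) (𝓝 0)) (hw : Continuous w) :
      Tendsto (fun x => v x * w x) (𝓝[≥] 0) (𝓝 0) := by
    simpa using hv.mul ((hw.tendsto 0).mono_left nhdsWithin_le_nhds)
  have hlim_ν := tendsto_integral_mul_smoothTransition hφν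
  have hlim := tendsto_integral_mul_smoothTransition (hν.integrable_mul hφ.deriv.deriv).integrableOn
  have hlim₁ := tendsto_mul_integral_mul_deriv_smoothTransition
    (hvanish hh_zero hφ.deriv.contDiff.continuous)
  have hlim₂ := tendsto_mul_integral_mul_deriv_deriv_smoothTransition
    (hvanish hquot hφ.contDiff.continuous)
  refine tendsto_nhds_unique hlim_ν ?_
  simp only [hν.integral_mul_smoothTransition hh₀ hφ]
  simpa using (hlim.neg.sub (hlim₁.const_mul 2)).sub hlim₂

theorem integral_Ioi_mul_deriv_deriv (hν : HasNegSecondDerivOn h ν U) {d : ℝ}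
    (hh : HasDerivWithinAt h d (Ici 0) 0) (hφ : IsTestFunction U φ) :
    -∫ x in Ioi 0, h x * deriv (deriv φ) x
      = (∫ x in Ioi 0, φ x ∂ν) + h 0 * deriv φ 0 - d * φ 0 := by
  wlog hφν : IntegrableOn φ (Ioi 0) ν generalizing ν
  · rw [integral_undef hφν, this (hν.zero_of_not_integrable hφ (mt Integrable.integrableOn hφν))
      (by simp [IntegrableOn])]
    simp
  have haffine : HasDerivWithinAt (fun x => h x - (h 0 + d * x)) 0 (Ici 0) 0 := by
    have hline : HasDerivWithinAt (fun x => h 0 + d * x) d (Ici 0) 0 := by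
      simpa using ((hasDerivWithinAt_id 0 (Ici 0)).const_mul d).const_add (h 0)
    simpa using hh.fun_sub hline
  have hgreen :=
    (hν.sub_affine (h 0) d).integral_Ioi_of_hasDerivWithinAt_zero (by simp) haffine hφ hφν
  have hcont : Continuous fun x => h 0 + d * x := by fun_prop
  simp only [sub_mul] at hgreen
  rw [integral_sub (hν.integrable_mul hφ.deriv.deriv).integrableOn
    (hφ.deriv.deriv.integrable_mul (hcont.locallyIntegrable.locallyIntegrableOn U)).integrableOn,
    hφ.integral_Ioi_affine_mul_deriv_deriv] at hgreen
  rw [hgreen]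
  ring

theorem integral_Iic_mul_deriv_deriv (hν : HasNegSecondDerivOn h ν U) {d : ℝ}
    (hh : HasDerivWithinAt h d (Iic 0) 0) (hφ : IsTestFunction U φ) :
    -∫ x in Iic 0, h x * deriv (deriv φ) x
      = (∫ x in Iio 0, φ x ∂ν) - h 0 * deriv φ 0 + d * φ 0 := by
  have hreflect : HasDerivWithinAt (fun x => h (-1 * x)) (-1 * d) (Ici 0) 0 :=
    hasDerivWithinAt_comp_mul_left_zero hh fun x (hx : 0 ≤ x) => by simpa using hx
  have hgreen := (hν.comp_mul_left (s := -1) (mapsTo_preimage _ U)).integral_Ioi_mul_deriv_deriv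
    hreflect (hφ.comp_mul_left (by norm_num) subset_rfl)
  rw [setIntegral_ofReal_smul_map_div (φ := fun x => φ (-1 * x))
    (hφ.contDiff.continuous.comp (by fun_prop)) _ _ measurableSet_Ioi] at hgreen
  simp only [deriv_deriv_comp_mul_left, deriv_comp_mul_left] at hgreen
  simpa [div_neg, integral_comp_neg_Ioi (0 : ℝ) fun x => h x * deriv (deriv φ) x,
    ← sub_eq_add_neg] using hgreen

/-! ### Piecewise linear changes of variables -/

variable {g : ℝ → ℝ} {gl gr : ℝ} {μ : Measure ℝ}

lemma integral_Ioi_comp_mul_left (hμ : HasNegSecondDerivOn g μ U)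
    (hgl : HasDerivWithinAt g gl (Iic 0) 0) (hgr : HasDerivWithinAt g gr (Ici 0) 0)
    (hV : MeasurableSet V) {s : ℝ} (hs : MapsTo (s * ·) V U) (hφ : IsTestFunction V φ) :
    -∫ x in Ioi 0, g (s * x) * deriv (deriv φ) x
      = |s| * (∫ y in (s * ·) '' (V ∩ Ioi 0), φ (y / s) ∂μ) + g 0 * deriv φ 0
        - s * (if 0 ≤ s then gr else gl) * φ 0 := by
  rw [(hμ.comp_mul_left hs).integral_Ioi_mul_deriv_deriv
      (hasDerivWithinAt_Ici_comp_mul_left hgl hgr s) hφ,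
    ← hφ.setIntegral_inter measurableSet_Ioi,
    setIntegral_ofReal_smul_map_div hφ.contDiff.continuous s μ (hV.inter measurableSet_Ioi),
    mul_zero]

lemma integral_Iic_comp_mul_left (hμ : HasNegSecondDerivOn g μ U)
    (hgl : HasDerivWithinAt g gl (Iic 0) 0) (hgr : HasDerivWithinAt g gr (Ici 0) 0)
    (hV : MeasurableSet V) {s : ℝ} (hs : MapsTo (s * ·) V U) (hφ : IsTestFunction V φ) :
    -∫ x in Iic 0, g (s * x) * deriv (deriv φ) x
      = |s| * (∫ y in (s * ·) '' (V ∩ Iio 0), φ (y / s) ∂μ) - g 0 * deriv φ 0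
        + s * (if 0 ≤ s then gl else gr) * φ 0 := by
  rw [(hμ.comp_mul_left hs).integral_Iic_mul_deriv_deriv
      (hasDerivWithinAt_Iic_comp_mul_left hgl hgr s) hφ,
    ← hφ.setIntegral_inter measurableSet_Iio,
    setIntegral_ofReal_smul_map_div hφ.contDiff.continuous s μ (hV.inter measurableSet_Iio),
    mul_zero]

end HasNegSecondDerivOn

lemma mul_ite_sub_mul_ite_eq (l r gl gr : ℝ) :
    l * (if 0 ≤ l then gl else gr) - r * (if 0 ≤ r then gr else gl)
      = if 0 ≤ l ∧ 0 ≤ r then l * gl - r * gr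
        else if 0 ≤ l ∧ r ≤ 0 then (l - r) * gl
        else if l ≤ 0 ∧ 0 ≤ r then (l - r) * gr
        else l * gr - r * gl := by
  grind

theorem stmt_11_general {U V : Set ℝ} (hV : MeasurableSet V) {l r : ℝ}
    (hl : MapsTo (l * ·) V U) (hr : MapsTo (r * ·) V U)
    {f : ℝ → ℝ} (hf : ∀ x ≤ (0 : ℝ), f x = l * x) (hf' : ∀ x ≥ (0 : ℝ), f x = r * x)
    {g : ℝ → ℝ} {gl gr : ℝ}
    (hgl : HasDerivWithinAt g gl (Iic 0) 0) (hgr : HasDerivWithinAt g gr (Ici 0) 0)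
    {μ : Measure ℝ} (hμ : HasNegSecondDerivOn g μ U) :
    let c : ℝ :=
      if 0 ≤ l ∧ 0 ≤ r then l * gl - r * gr
      else if 0 ≤ l ∧ r ≤ 0 then (l - r) * gl
      else if l ≤ 0 ∧ 0 ≤ r then (l - r) * gr
      else l * gr - r * gl
    ∀ φ : ℝ → ℝ, IsTestFunction V φ →
      -∫ x in V, g (f x) * deriv (deriv φ) x
        = |l| * (∫ y in f '' (V ∩ Iio 0), φ (y / l) ∂μ)
          + |r| * (∫ y in f '' (V ∩ Ioi 0), φ (y / r) ∂μ)
          + c * φ 0 := by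
  intro c φ hφ
  have hleft : EqOn (fun x => g (l * x) * deriv (deriv φ) x) (fun x => g (f x) * deriv (deriv φ) x)
      (Iic 0) := fun x hx => by simp only [hf x hx]
  have hright : EqOn (fun x => g (r * x) * deriv (deriv φ) x)
      (fun x => g (f x) * deriv (deriv φ) x) (Ioi 0) := fun x hx => by
    simp only [hf' x (le_of_lt hx)]
  have hint_left := ((hμ.comp_mul_left hl).integrable_mul hφ.deriv.deriv).integrableOn.congr_fun
    hleft measurableSet_Iic
  have hint_right := ((hμ.comp_mul_left hr).integrable_mul hφ.deriv.deriv).integrableOn.congr_fun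
    hright measurableSet_Ioi
  have himage_left : f '' (V ∩ Iio 0) = (l * ·) '' (V ∩ Iio 0) :=
    image_congr fun x hx => hf x (le_of_lt hx.2)
  have himage_right : f '' (V ∩ Ioi 0) = (r * ·) '' (V ∩ Ioi 0) :=
    image_congr fun x hx => hf' x (le_of_lt hx.2)
  have hc : c = l * (if 0 ≤ l then gl else gr) - r * (if 0 ≤ r then gr else gl) :=
    (mul_ite_sub_mul_ite_eq l r gl gr).symm
  rw [hφ.deriv.deriv.setIntegral_mul fun x => g (f x),
    ← intervalIntegral.integral_Iic_add_Ioi hint_left hint_right, neg_add,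
    ← setIntegral_congr_fun measurableSet_Iic hleft,
    ← setIntegral_congr_fun measurableSet_Ioi hright,
    hμ.integral_Iic_comp_mul_left hgl hgr hV hl hφ, hμ.integral_Ioi_comp_mul_left hgl hgr hV hr hφ,
    himage_left, himage_right, hc]
  ring

/-- Piecewise affine change of variables for the second-derivative measure
of a concave function.  Let `f(x) = l·x` for `x ≤ 0` and `f(x) = r·x` for `x ≥ 0` map
`(−ε,ε)` into `(−1,1)`, let `g` be concave on `(−1,1)` with left and right derivatives
`gl = g'_l(0)`, `gr = g'_r(0)`, and let `μ` be the measure associated to `g`.  Then the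
distribution `μ_{g∘f}` is the measure
`|l|·(f|_{(−ε,0)}⁻¹)_*(μ|_{f((−ε,0))}) + |r|·(f|_{(0,ε)}⁻¹)_*(μ|_{f((0,ε))}) + c_{f,g}·δ₀`,
expressed against test functions, where `c_{f,g}` is given by the four-case formula. -/
theorem stmt_11 (ε l r : ℝ) (hε : 0 < ε) (hl : |l| * ε ≤ 1) (hr : |r| * ε ≤ 1)
    (f : ℝ → ℝ) (hf : ∀ x ≤ (0 : ℝ), f x = l * x) (hf' : ∀ x ≥ (0 : ℝ), f x = r * x)
    (g : ℝ → ℝ) (hg : ConcaveOn ℝ (Ioo (-1) 1) g)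
    (gl gr : ℝ)
    (hgl : HasDerivWithinAt g gl (Iic 0) 0) (hgr : HasDerivWithinAt g gr (Ici 0) 0)
    (μ : Measure ℝ)
    (hμ : ∀ φ : ℝ → ℝ, ContDiff ℝ (⊤ : ℕ∞) φ → HasCompactSupport φ →
      tsupport φ ⊆ Ioo (-1) 1 →
      ∫ y, φ y ∂μ = -∫ y in Ioo (-1) 1, g y * deriv (deriv φ) y) :
    let c : ℝ :=
      if 0 ≤ l ∧ 0 ≤ r then l * gl - r * gr
      else if 0 ≤ l ∧ r ≤ 0 then (l - r) * gl
      else if l ≤ 0 ∧ 0 ≤ r then (l - r) * gr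
      else l * gr - r * gl
    ∀ φ : ℝ → ℝ, ContDiff ℝ (⊤ : ℕ∞) φ → HasCompactSupport φ →
      tsupport φ ⊆ Ioo (-ε) ε →
      -∫ x in Ioo (-ε) ε, g (f x) * deriv (deriv φ) x
        = |l| * (∫ y in f '' Ioo (-ε) 0, φ (y / l) ∂μ)
          + |r| * (∫ y in f '' Ioo 0 ε, φ (y / r) ∂μ)
          + c * φ 0 := by
  intro c φ hφ hφ_compact hφε
  have hμ' : HasNegSecondDerivOn g μ (Ioo (-1) 1) :=
    .of_locallyIntegrableOn ((hg.continuousOn isOpen_Ioo).locallyIntegrableOn measurableSet_Ioo)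
      fun ψ hψ => hμ ψ hψ.contDiff hψ.hasCompactSupport hψ.tsupport_subset
  have hneg : Ioo (-ε) 0 = Ioo (-ε) ε ∩ Iio 0 := by rw [Ioo_inter_Iio, min_eq_right hε.le]
  have hpos : Ioo 0 ε = Ioo (-ε) ε ∩ Ioi 0 := by
    rw [Ioo_inter_Ioi, max_eq_right (neg_nonpos.2 hε.le)]
  rw [hneg, hpos]
  exact stmt_11_general measurableSet_Ioo (fun _ => mul_mem_Ioo_of_abs_mul_le_one hl)
    (fun _ => mul_mem_Ioo_of_abs_mul_le_one hr) hf hf' hgl hgr hμ' φ ⟨hφ, hφ_compact, hφε⟩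
end

section
/- If there exists a nondegenerate interval [u,v] with u < v on which f = f₁ − f₀ is affine with slope n, or affine with slope −n (the maximal possible absolute value of the slope), then f is monotone on all of ℝ (not necessarily strictly monotone). -/
/-!
Suppose that `g` and `h` are concave with all slopes in `[m, M]`, and that `g - h` increases from
`u` to `v` at the maximal rate `M - m`. Then `g` has slope `M` and `h` has slope `m` between `u` and
`v`. Slopes of concave functions decrease, so `g` keeps the slope `M` on all of `(-∞, v]`, where `h`
does not grow faster, and `h` keeps the slope `m` on all of `[u, ∞)`, where `g` does not grow
slower. Hence `g - h` is monotone on both half-lines, which overlap.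
-/

open Set

section LinearOrderedField

variable {𝕜 : Type*} [Field 𝕜] [LinearOrder 𝕜] [IsStrictOrderedRing 𝕜]

section ConcaveMonotone

variable {β : Type*} [AddCommMonoid β] [LinearOrder β] [IsOrderedCancelAddMonoid β] [Module 𝕜 β]
  [PosSMulStrictMono 𝕜 β] {s : Set 𝕜} {f : 𝕜 → β} {u v : 𝕜}

theorem antitoneOn_inter_Ici_of_concaveOn_of_monotoneOn (hf : ConcaveOn 𝕜 s f)
    (hmono : MonotoneOn f s) (hu : u ∈ s) (hv : v ∈ s) (huv : u < v) (hvu : f v ≤ f u) :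
    AntitoneOn f (s ∩ Ici u) := by
  have f_le : ∀ y ∈ s, f y ≤ f u := fun y hy ↦ by
    rcases le_total y v with hyv | hvy
    · exact (hmono hy hv hyv).trans hvu
    · exact (hf.right_le_of_le_left'' hu hy huv hvy hvu).trans hvu
  exact fun x hx y hy _ ↦ (f_le y hy.1).trans (hmono hu hx.1 hx.2)

theorem monotoneOn_inter_Iic_of_concaveOn_of_antitoneOn (hf : ConcaveOn 𝕜 s f)
    (hanti : AntitoneOn f s) (hu : u ∈ s) (hv : v ∈ s) (huv : u < v) (hle : f u ≤ f v) :
    MonotoneOn f (s ∩ Iic v) := by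
  have f_le : ∀ x ∈ s, f x ≤ f v := fun x hx ↦ by
    rcases le_total x u with hxu | hux
    · exact (hf.left_le_of_le_right'' hx hv hxu huv hle).trans hle
    · exact (hanti hu hx hux).trans hle
  exact fun x hx y hy _ ↦ (f_le x hx.1).trans (hanti hy.1 hv hy.2)

end ConcaveMonotone

theorem concaveOn_sub_mul {s : Set 𝕜} {f : 𝕜 → 𝕜} (hf : ConcaveOn 𝕜 s f) (a : 𝕜) :
    ConcaveOn 𝕜 s fun x ↦ f x - a * x :=
  hf.sub ((LinearMap.mulLeft 𝕜 a).convexOn hf.1)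

/-- Concave functions on the whole line all of whose difference quotients lie in `[m, M]`. The
bounds are encoded as monotonicity properties of `f x - m * x` and `f x - M * x`, which avoids
division. -/
structure ConcaveWithSlopesIn (m M : 𝕜) (f : 𝕜 → 𝕜) : Prop where
  concaveOn : ConcaveOn 𝕜 univ f
  monotone_sub_mul : Monotone fun x ↦ f x - m * x
  antitone_sub_mul : Antitone fun x ↦ f x - M * x

namespace ConcaveWithSlopesIn

variable {m M : 𝕜} {f g h : 𝕜 → 𝕜}

theorem affine {b : 𝕜} (hb : b ∈ Icc m M) (c : 𝕜) :
    ConcaveWithSlopesIn m M fun x ↦ b * x + c where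
  concaveOn := ((LinearMap.mulLeft 𝕜 b).concaveOn convex_univ).add_const c
  monotone_sub_mul x y hxy := by
    linarith [mul_le_mul_of_nonneg_left hxy (sub_nonneg.2 hb.1)]
  antitone_sub_mul x y hxy := by
    linarith [mul_le_mul_of_nonneg_left hxy (sub_nonneg.2 hb.2)]

theorem inf (hf : ConcaveWithSlopesIn m M f) (hg : ConcaveWithSlopesIn m M g) :
    ConcaveWithSlopesIn m M (f ⊓ g) where
  concaveOn := hf.concaveOn.inf hg.concaveOn
  monotone_sub_mul := by
    simpa only [Pi.inf_apply, min_sub_sub_right] using hf.monotone_sub_mul.min hg.monotone_sub_mul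
  antitone_sub_mul := by
    simpa only [Pi.inf_apply, min_sub_sub_right] using hf.antitone_sub_mul.min hg.antitone_sub_mul

theorem finset_inf' {ι : Type*} {s : Finset ι} (hs : s.Nonempty) {F : ι → 𝕜 → 𝕜}
    (hF : ∀ j ∈ s, ConcaveWithSlopesIn m M (F j)) :
    ConcaveWithSlopesIn m M fun x ↦ s.inf' hs fun j ↦ F j x := by
  simpa only [← Finset.inf'_apply] using
    Finset.inf'_induction hs F (fun _ hf _ hg ↦ hf.inf hg) hF

theorem monotone_sub_of_maximal_increase (hg : ConcaveWithSlopesIn m M g)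
    (hh : ConcaveWithSlopesIn m M h) {u v : 𝕜} (huv : u < v)
    (hmax : (M - m) * (v - u) ≤ (g v - h v) - (g u - h u)) :
    Monotone fun x ↦ g x - h x := by
  have h_lower : h u - m * u ≤ h v - m * v := hh.monotone_sub_mul huv.le
  have g_upper : g v - M * v ≤ g u - M * u := hg.antitone_sub_mul huv.le
  have g_left : MonotoneOn (fun x ↦ g x - M * x) (univ ∩ Iic v) :=
    monotoneOn_inter_Iic_of_concaveOn_of_antitoneOn (concaveOn_sub_mul hg.concaveOn M)
      (hg.antitone_sub_mul.antitoneOn univ) (mem_univ u) (mem_univ v) huv (by linarith)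
  have h_right : AntitoneOn (fun x ↦ h x - m * x) (univ ∩ Ici u) :=
    antitoneOn_inter_Ici_of_concaveOn_of_monotoneOn (concaveOn_sub_mul hh.concaveOn m)
      (hh.monotone_sub_mul.monotoneOn univ) (mem_univ u) (mem_univ v) huv (by linarith)
  rw [univ_inter] at g_left h_right
  have monotone_left : MonotoneOn (fun x ↦ g x - h x) (Iic v) := fun x hx y hy hxy ↦ by
    linarith [g_left hx hy hxy, hh.antitone_sub_mul hxy]
  have monotone_right : MonotoneOn (fun x ↦ g x - h x) (Ici u) := fun x hx y hy hxy ↦ by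
    linarith [h_right hx hy hxy, hg.monotone_sub_mul hxy]
  exact monotone_left.Iic_union_Ici (monotone_right.mono (Ici_subset_Ici.2 huv.le))

end ConcaveWithSlopesIn

theorem stmt_14_general {ι : Fin 2 → Type*} {s : ∀ i, Finset (ι i)} (hs : ∀ i, (s i).Nonempty)
    {b c : ∀ i, ι i → 𝕜} {m M : 𝕜} (hb : ∀ i, ∀ j ∈ s i, b i j ∈ Icc m M) :
    let fc : Fin 2 → 𝕜 → 𝕜 := fun i x ↦ (s i).inf' (hs i) fun j ↦ b i j * x + c i j
    let f : 𝕜 → 𝕜 := fun x ↦ fc 1 x - fc 0 x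
    (∃ u v : 𝕜, u < v ∧ (M - m) * (v - u) ≤ |f v - f u|) → (Monotone f ∨ Antitone f) := by
  rintro fc f ⟨u, v, huv, hmax⟩
  have hfc : ∀ i, ConcaveWithSlopesIn m M (fc i) := fun i ↦
    .finset_inf' (hs i) fun j hj ↦ .affine (hb i j hj) (c i j)
  rcases le_abs.1 hmax with hmax | hmax
  · exact .inl ((hfc 1).monotone_sub_of_maximal_increase (hfc 0) huv hmax)
  · have neg_f_monotone : Monotone fun x ↦ fc 0 x - fc 1 x :=
      (hfc 0).monotone_sub_of_maximal_increase (hfc 1) huv (by linarith)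
    exact .inr (by simpa only [Pi.neg_def, neg_sub] using neg_f_monotone.neg)

end LinearOrderedField

/-- For `f = f₁ − f₀`, where `f_i(x) = min_j (b_iʲ·x + c_iʲ)` over nonempty
finite families with natural slopes `0 ≤ b_iʲ ≤ n`, and with the normalization that the
slope `n` occurs and the slope `0` occurs among the `b_iʲ`: if `f` is affine of slope `n`
or `−n` (the maximal possible absolute value) on some nondegenerate interval `[u,v]`,
then `f` is monotone on all of `ℝ` (not necessarily strictly). -/
theorem stmt_14 (n : ℕ) (hn : 2 ≤ n)
    (s : Fin 2 → Finset ℕ) (hs : ∀ i, (s i).Nonempty)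
    (b : Fin 2 → ℕ → ℕ) (cc : Fin 2 → ℕ → ℝ)
    (hb : ∀ i, ∀ j ∈ s i, b i j ≤ n)
    (hocc_n : ∃ i, ∃ j ∈ s i, b i j = n)
    (hocc_0 : ∃ i, ∃ j ∈ s i, b i j = 0) :
    let fc : Fin 2 → ℝ → ℝ := fun i x =>
      (s i).inf' (hs i) fun j => (b i j : ℝ) * x + cc i j
    let f : ℝ → ℝ := fun x => fc 1 x - fc 0 x
    (∃ u v : ℝ, u < v ∧
        ((∃ d : ℝ, ∀ x ∈ Set.Icc u v, f x = n * x + d) ∨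
         (∃ d : ℝ, ∀ x ∈ Set.Icc u v, f x = -(n : ℝ) * x + d))) →
    (Monotone f ∨ Antitone f) := by
  rintro fc f ⟨u, v, huv, hslope⟩
  have slope_mem : ∀ i, ∀ j ∈ s i, (b i j : ℝ) ∈ Icc 0 (n : ℝ) := fun i j hj ↦
    ⟨Nat.cast_nonneg _, Nat.cast_le.2 (hb i j hj)⟩
  refine stmt_14_general hs slope_mem ⟨u, v, huv, le_abs.2 (hslope.imp ?_ ?_)⟩
  all_goals
    rintro ⟨d, hd⟩
    linarith [hd u (left_mem_Icc.2 huv.le), hd v (right_mem_Icc.2 huv.le)]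
end

section
/- The function g is concave and satisfies the functional equation g(f(x)) = 4·g(x) − c(x) for every x ∈ ℝ; hence g is the unique normalized potential of the tent map. -/
/-!
With `r = 1/2`, the potential is a constant minus the Huber function `H`, which is the conjugate
`H(x) = max_{|m| ≤ r} (m x - m² / 2)` of the parabola restricted to `[-r, r]`; a supremum of affine
functions is convex, so the potential is concave.

The tent map `x ↦ -2|x| + r` preserves both `|x| ≤ r` and its complement. Hence the two sides of the
functional equation use the same branch of `H`, and there it is a polynomial identity in `|x|`.
-/

theorem convexOn_of_isLUB {𝕜 E β ι : Type*} [Semiring 𝕜] [PartialOrder 𝕜] [AddCommMonoid E]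
    [SMul 𝕜 E] [AddCommMonoid β] [PartialOrder β] [IsOrderedAddMonoid β] [SMul 𝕜 β]
    [PosSMulMono 𝕜 β] {s : Set E} {I : Set ι} {φ : ι → E → β} {f : E → β} (hs : Convex 𝕜 s)
    (hφ : ∀ i ∈ I, ConvexOn 𝕜 s (φ i)) (hf : ∀ x ∈ s, IsLUB ((φ · x) '' I) (f x)) :
    ConvexOn 𝕜 s f := by
  refine ⟨hs, fun x hx y hy a b ha hb hab ↦ (hf _ (hs hx hy ha hb hab)).2 ?_⟩
  rintro _ ⟨i, hi, rfl⟩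
  have le_f {z : E} (hz : z ∈ s) : φ i z ≤ f z := (hf z hz).1 (Set.mem_image_of_mem _ hi)
  calc
    φ i (a • x + b • y) ≤ a • φ i x + b • φ i y := (hφ i hi).2 hx hy ha hb hab
    _ ≤ a • f x + b • f y := by gcongr; exacts [le_f hx, le_f hy]

section Huber

variable {𝕜 : Type*} [Field 𝕜] [LinearOrder 𝕜] {r x : 𝕜}

/-- The Huber function with threshold `r`: the parabola `x² / 2` on `[-r, r]`, continued by its
tangent lines at `±r`. It is meant for `0 ≤ r`. -/
def huber (r x : 𝕜) : 𝕜 :=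
  if |x| ≤ r then x ^ 2 / 2 else r * |x| - r ^ 2 / 2

theorem huber_of_abs_le (h : |x| ≤ r) : huber r x = x ^ 2 / 2 :=
  if_pos h

theorem huber_of_lt_abs (h : r < |x|) : huber r x = r * |x| - r ^ 2 / 2 :=
  if_neg h.not_ge

variable [IsStrictOrderedRing 𝕜]

theorem mul_sub_sq_div_two_le_huber {m : 𝕜} (hm : |m| ≤ r) (x : 𝕜) :
    m * x - m ^ 2 / 2 ≤ huber r x := by
  rcases le_or_gt |x| r with hx | hx
  · rw [huber_of_abs_le hx]
    linarith [sq_nonneg (x - m)]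
  · rw [huber_of_lt_abs hx]
    calc
      m * x - m ^ 2 / 2 ≤ |m| * |x| - |m| ^ 2 / 2 := by
        rw [sq_abs, ← abs_mul]
        gcongr
        exact le_abs_self _
      _ ≤ r * |x| - r ^ 2 / 2 := by
        -- The difference of the two sides is `(r - |m|) * (|x| - (r + |m|) / 2)`.
        linarith [mul_nonneg (sub_nonneg.2 hm) (by linarith : 0 ≤ |x| - (r + |m|) / 2)]

theorem exists_huber_eq_mul_sub_sq_div_two (hr : 0 ≤ r) (x : 𝕜) :
    ∃ m, |m| ≤ r ∧ m * x - m ^ 2 / 2 = huber r x := by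
  rcases le_or_gt |x| r with hx | hx
  · exact ⟨x, hx, by rw [huber_of_abs_le hx]; ring⟩
  · rw [huber_of_lt_abs hx]
    rcases abs_choice x with h | h <;> rw [h]
    · exact ⟨r, (abs_of_nonneg hr).le, rfl⟩
    · exact ⟨-r, by rw [abs_neg, abs_of_nonneg hr], by ring⟩

theorem isGreatest_huber (hr : 0 ≤ r) (x : 𝕜) :
    IsGreatest ((fun m ↦ m * x - m ^ 2 / 2) '' {m | |m| ≤ r}) (huber r x) :=
  ⟨exists_huber_eq_mul_sub_sq_div_two hr x,
    Set.forall_mem_image.2 fun _ hm ↦ mul_sub_sq_div_two_le_huber hm x⟩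

theorem convexOn_huber (hr : 0 ≤ r) : ConvexOn 𝕜 Set.univ (huber r) :=
  convexOn_of_isLUB (φ := fun m x ↦ m * x - m ^ 2 / 2) convex_univ
    (fun m _ ↦ ((LinearMap.mulLeft 𝕜 m).convexOn convex_univ).sub
      (concaveOn_const _ convex_univ))
    fun x _ ↦ (isGreatest_huber hr x).isLUB

theorem huber_neg_two_mul_abs_add (r x : 𝕜) :
    huber r (-2 * |x| + r) = 4 * huber r x - 2 * r * |x| + r ^ 2 / 2 := by
  rcases le_or_gt |x| r with hx | hx
  · have hfx : |-2 * |x| + r| ≤ r := abs_le.2 ⟨by linarith, by linarith [abs_nonneg x]⟩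
    rw [huber_of_abs_le hx, huber_of_abs_le hfx]
    linear_combination 2 * sq_abs x
  · have hfx : |-2 * |x| + r| = 2 * |x| - r := by
      rw [abs_of_nonpos (by linarith [abs_nonneg x])]
      ring
    rw [huber_of_lt_abs hx, huber_of_lt_abs (by linarith), hfx]
    ring

end Huber

theorem stmt_16_general {𝕜 : Type*} [Field 𝕜] [LinearOrder 𝕜] [IsStrictOrderedRing 𝕜] {r : 𝕜}
    (hr : 0 ≤ r) :
    let f : 𝕜 → 𝕜 := fun x => -2 * |x| + r
    let c : 𝕜 → 𝕜 := fun x => -2 * r * |x| + r ^ 2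
    let g : 𝕜 → 𝕜 := fun x =>
      if |x| ≤ r then -x ^ 2 / 2 + r ^ 2 / 6 else -r * |x| + 2 * r ^ 2 / 3
    ConcaveOn 𝕜 Set.univ g ∧ ∀ x : 𝕜, g (f x) = 4 * g x - c x := by
  intro f c g
  have hg : g = fun x ↦ r ^ 2 / 6 - huber r x := by
    funext x
    simp only [g, huber]
    split_ifs <;> ring
  rw [hg]
  refine ⟨(concaveOn_const _ convex_univ).sub (convexOn_huber hr), fun x ↦ ?_⟩
  simp only [f, c, huber_neg_two_mul_abs_add]
  ring

/-- The potential `g` of the tent map `f(x) = −2|x| + 1/2`, defined by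
`g(x) = −x²/2 + 1/24` for `|x| ≤ 1/2` and `g(x) = −|x|/2 + 1/6` for `|x| ≥ 1/2`, is
concave and satisfies the functional equation `g(f(x)) = 4·g(x) − c(x)` with the cocycle
`c(x) = −|x| + 1/4`. -/
theorem stmt_16 :
    let f : ℝ → ℝ := fun x => -2 * |x| + 1 / 2
    let c : ℝ → ℝ := fun x => -|x| + 1 / 4
    let g : ℝ → ℝ := fun x =>
      if |x| ≤ 1 / 2 then -x ^ 2 / 2 + 1 / 24 else -|x| / 2 + 1 / 6
    ConcaveOn ℝ Set.univ g ∧ ∀ x : ℝ, g (f x) = 4 * g x - c x := by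
  have h := stmt_16_general (one_half_pos (α := ℝ)).le
  ring_nf at h ⊢
  exact h
end
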